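/- arXiv:1506.07756 — 4 statements merged into one kernel-verified Lean document; each statement's English description precedes it below -/
import Mathlib

section
/- Let ρ be a density operator on H = H_1 ⊗ … ⊗ H_n and N = {N_j} a neighborhood structure. If ρ is FFQLS relative to N, then span(ρ) = ∩_j [F_{ρ_{N_j}}(Σ_{N_j}(ρ)) ⊗ B(H_{N̄_j})], i.e., the complex span of ρ equals the intersection over all neighborhoods of the extended minimal modular-invariant distorted algebras generated by the neighborhood operator Schmidt spans of ρ. -/
namespace QDS

open Matrix
open scoped ComplexOrder

/-! ### Basic single-system notions -/

section Single

variable {ι : Type*} [Fintype ι] [DecidableEq ι]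

open Classical in
/-- The (unique) positive-semidefinite square root of a positive-semidefinite matrix
(junk value `0` if no positive-semidefinite square root exists). -/
noncomputable def msqrt (A : Matrix ι ι ℂ) : Matrix ι ι ℂ :=
  if h : ∃ B : Matrix ι ι ℂ, B.PosSemidef ∧ B * B = A then h.choose else 0

open Classical in
/-- The Moore–Penrose pseudoinverse of a matrix, defined via its characterizing
properties (it always exists and is unique for complex matrices). -/
noncomputable def mpinv (A : Matrix ι ι ℂ) : Matrix ι ι ℂ :=
  if h : ∃ B : Matrix ι ι ℂ,
      A * B * A = A ∧ B * A * B = B ∧ (A * B)ᴴ = A * B ∧ (B * A)ᴴ = B * A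
  then h.choose else 0

/-- A density operator: positive semidefinite with unit trace. -/
def IsDensity (ρ : Matrix ι ι ℂ) : Prop := ρ.PosSemidef ∧ ρ.trace = 1

/-- A CPTP map in Kraus (operator-sum) form. -/
def IsCPTP (T : Matrix ι ι ℂ →ₗ[ℂ] Matrix ι ι ℂ) : Prop :=
  ∃ (m : ℕ) (M : Fin m → Matrix ι ι ℂ),
    (∀ X, T X = ∑ k, M k * X * (M k)ᴴ) ∧ (∑ k, (M k)ᴴ * M k) = 1

/-- The Lindblad (QDS) generator with Hamiltonian `Hm` and noise operators `Lk`: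
`L(X) = -i[Hm, X] + Σₖ (Lₖ X Lₖ† - ½{Lₖ†Lₖ, X})`. -/
noncomputable def lindbladMap (Hm : Matrix ι ι ℂ) {m : ℕ} (Lk : Fin m → Matrix ι ι ℂ) :
    Matrix ι ι ℂ →ₗ[ℂ] Matrix ι ι ℂ :=
  (-Complex.I) • (LinearMap.mulLeft ℂ Hm - LinearMap.mulRight ℂ Hm) +
    ∑ k, ((LinearMap.mulRight ℂ (Lk k)ᴴ).comp (LinearMap.mulLeft ℂ (Lk k)) -
      ((1 : ℂ)/2) • (LinearMap.mulLeft ℂ ((Lk k)ᴴ * Lk k) +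
        LinearMap.mulRight ℂ ((Lk k)ᴴ * Lk k)))

/-- `L` is a QDS (Lindblad) generator. -/
def IsLindblad (L : Matrix ι ι ℂ →ₗ[ℂ] Matrix ι ι ℂ) : Prop :=
  ∃ Hm : Matrix ι ι ℂ, Hm.IsHermitian ∧
    ∃ (m : ℕ) (Lk : Fin m → Matrix ι ι ℂ), L = lindbladMap Hm Lk

/-- `Ld` is the Hilbert–Schmidt adjoint of `L` (w.r.t. `⟨X,Y⟩ = Tr(X†Y)`). -/
def IsHSAdjoint (L Ld : Matrix ι ι ℂ →ₗ[ℂ] Matrix ι ι ℂ) : Prop :=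
  ∀ X Y : Matrix ι ι ℂ, ((Ld X)ᴴ * Y).trace = (Xᴴ * L Y).trace

/-- The fixed-point set of a (super)operator. -/
def fixSet (T : Matrix ι ι ℂ →ₗ[ℂ] Matrix ι ι ℂ) : Set (Matrix ι ι ℂ) := {X | T X = X}

/-- The support of an operator: the orthogonal complement of its kernel,
equivalently the range of its adjoint. -/
noncomputable def msupp (A : Matrix ι ι ℂ) : Submodule ℂ (ι → ℂ) := LinearMap.range (Aᴴ).mulVecLin

/-- The support of a set of operators: the span of the union of their supports. -/
noncomputable def suppSet (W : Set (Matrix ι ι ℂ)) : Submodule ℂ (ι → ℂ) := ⨆ O ∈ W, msupp O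

/-- The minimal modular-invariant distorted algebra generated by `W` relative to `ρ`:
the smallest subspace containing `W` that is closed under the adjoint, under the
`ρ`-modified product `(X,Y) ↦ X ρ⁻ Y`, and under the modular map `X ↦ ρ^{1/2} X ρ⁻^{1/2}`. -/
noncomputable def Fdist (ρ : Matrix ι ι ℂ) (W : Set (Matrix ι ι ℂ)) :
    Submodule ℂ (Matrix ι ι ℂ) :=
  sInf {S : Submodule ℂ (Matrix ι ι ℂ) | W ⊆ S ∧ (∀ X ∈ S, Xᴴ ∈ S) ∧
    (∀ X ∈ S, ∀ Y ∈ S, X * mpinv ρ * Y ∈ S) ∧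
    (∀ X ∈ S, msqrt ρ * X * mpinv (msqrt ρ) ∈ S)}

/-- `ρ` is globally asymptotically stable for the generator `L`: it is invariant and every
solution of `ẋ = L(x)` starting at a density operator converges to `ρ` as `t → ∞`. -/
def IsGAS (L : Matrix ι ι ℂ →ₗ[ℂ] Matrix ι ι ℂ) (ρ : Matrix ι ι ℂ) : Prop :=
  L ρ = 0 ∧
  ∀ σ : Matrix ι ι ℂ, IsDensity σ →
    ∀ x : ℝ → Matrix ι ι ℂ, x 0 = σ →
      (∀ t : ℝ, ∀ i j, HasDerivAt (fun s : ℝ => x s i j) (L (x t) i j) t) →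
      ∀ i j, Filter.Tendsto (fun t : ℝ => x t i j) Filter.atTop (nhds (ρ i j))

end Single

/-! ### Bipartite notions -/

section Bipartite

variable {α β : Type*} [Fintype α] [Fintype β] [DecidableEq α] [DecidableEq β]

/-- Partial trace over the second factor. -/
noncomputable def ptraceB (ρ : Matrix (α × β) (α × β) ℂ) : Matrix α α ℂ :=
  Matrix.of fun i j => ∑ k : β, ρ (i, k) (j, k)

/-- The operator Schmidt span of `ρ` on the first factor:
`{Tr_B[(I ⊗ B) ρ] : B ∈ B(H_B)}`. -/
noncomputable def opSchmidtA (ρ : Matrix (α × β) (α × β) ℂ) : Set (Matrix α α ℂ) :=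
  {A | ∃ B : Matrix β β ℂ,
    A = ptraceB ((Matrix.kroneckerMap (· * ·) (1 : Matrix α α ℂ) B) * ρ)}

/-- The (vector) Schmidt span of `v ∈ V_A ⊗ V_B` relative to `V_A`: the image of `v`
under partial inner products with vectors of `V_B`. -/
def vSchmidtA (v : α × β → ℂ) : Set (α → ℂ) :=
  {w | ∃ b : β → ℂ, w = fun a => ∑ j, (starRingEnd ℂ) (b j) * v (a, j)}

/-- `Σ_A(v) ⊗ V_B` as a subspace of `V_A ⊗ V_B`. -/
noncomputable def extVSchmidtA (v : α × β → ℂ) : Submodule ℂ (α × β → ℂ) :=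
  Submodule.span ℂ {v' | ∃ w ∈ vSchmidtA v, ∃ b : β → ℂ, v' = fun p => w p.1 * b p.2}

end Bipartite

/-! ### Multipartite notions -/

section Multipartite

variable {n : ℕ} {d : Fin n → Type*} [∀ a, Fintype (d a)] [∀ a, DecidableEq (d a)]

/-- Index type of the neighborhood factor `H_N`. -/
abbrev nbhdIdx (d : Fin n → Type*) (N : Finset (Fin n)) : Type _ :=
  ∀ a : {x : Fin n // x ∈ N}, d a

/-- Index type of the complementary factor `H_N̄`. -/
abbrev nbhdCoIdx (d : Fin n → Type*) (N : Finset (Fin n)) : Type _ :=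
  ∀ a : {x : Fin n // ¬ x ∈ N}, d a

/-- The factorization `H ≃ H_N ⊗ H_N̄` at the level of index types. -/
def splitEquiv (d : Fin n → Type*) (N : Finset (Fin n)) :
    (∀ a, d a) ≃ nbhdIdx d N × nbhdCoIdx d N :=
  Equiv.piEquivPiSubtypeProd (fun x => x ∈ N) d

variable (d)

/-- The operator `A ⊗ B` on `H = H_N ⊗ H_N̄`, viewed as an operator on `H`. -/
noncomputable def splitLift (N : Finset (Fin n))
    (A : Matrix (nbhdIdx d N) (nbhdIdx d N) ℂ)
    (B : Matrix (nbhdCoIdx d N) (nbhdCoIdx d N) ℂ) :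
    Matrix (∀ a, d a) (∀ a, d a) ℂ :=
  (Matrix.kroneckerMap (· * ·) A B).submatrix (splitEquiv d N) (splitEquiv d N)

/-- The neighborhood operator `A ⊗ I_N̄` on `H`. -/
noncomputable def nbhdLift (N : Finset (Fin n))
    (A : Matrix (nbhdIdx d N) (nbhdIdx d N) ℂ) : Matrix (∀ a, d a) (∀ a, d a) ℂ :=
  splitLift d N A 1

/-- The operator `I_N ⊗ B` on `H`. -/
noncomputable def coLift (N : Finset (Fin n))
    (B : Matrix (nbhdCoIdx d N) (nbhdCoIdx d N) ℂ) : Matrix (∀ a, d a) (∀ a, d a) ℂ :=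
  splitLift d N 1 B

/-- The reduced state `ρ_N = Tr_N̄(ρ)` on the neighborhood `N`. -/
noncomputable def nbhdPtrace (N : Finset (Fin n)) (ρ : Matrix (∀ a, d a) (∀ a, d a) ℂ) :
    Matrix (nbhdIdx d N) (nbhdIdx d N) ℂ :=
  Matrix.of fun i j => ∑ k : nbhdCoIdx d N,
    ρ ((splitEquiv d N).symm (i, k)) ((splitEquiv d N).symm (j, k))

/-- The operator Schmidt span of `ρ` on the neighborhood `N`:
`Σ_N(ρ) = {Tr_N̄[(I_N ⊗ B) ρ] : B}`. -/
noncomputable def nbhdSchmidt (N : Finset (Fin n)) (ρ : Matrix (∀ a, d a) (∀ a, d a) ℂ) :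
    Set (Matrix (nbhdIdx d N) (nbhdIdx d N) ℂ) :=
  {A | ∃ B : Matrix (nbhdCoIdx d N) (nbhdCoIdx d N) ℂ,
    A = nbhdPtrace d N (coLift d N B * ρ)}

/-- The extended minimal modular-invariant distorted algebra
`F_{ρ_N}(Σ_N(ρ)) ⊗ B(H_N̄)` as a subspace of `B(H)`. -/
noncomputable def extF (N : Finset (Fin n)) (ρ : Matrix (∀ a, d a) (∀ a, d a) ℂ) :
    Submodule ℂ (Matrix (∀ a, d a) (∀ a, d a) ℂ) :=
  Submodule.span ℂ {X | ∃ A ∈ Fdist (nbhdPtrace d N ρ) (nbhdSchmidt d N ρ),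
    ∃ B : Matrix (nbhdCoIdx d N) (nbhdCoIdx d N) ℂ, X = splitLift d N A B}

/-- A neighborhood QDS generator for `N`: a Lindblad generator whose Hamiltonian and
noise operators all act as `X_N ⊗ I_N̄`. -/
def IsNbhdGen (N : Finset (Fin n))
    (L : Matrix (∀ a, d a) (∀ a, d a) ℂ →ₗ[ℂ] Matrix (∀ a, d a) (∀ a, d a) ℂ) : Prop :=
  ∃ HN : Matrix (nbhdIdx d N) (nbhdIdx d N) ℂ, HN.IsHermitian ∧
    ∃ (m : ℕ) (Lk : Fin m → Matrix (nbhdIdx d N) (nbhdIdx d N) ℂ),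
      L = lindbladMap (nbhdLift d N HN) fun k => nbhdLift d N (Lk k)

/-- A purely dissipative neighborhood generator for `N` (zero Hamiltonian in some
Lindblad representation). -/
def IsDissipNbhdGen (N : Finset (Fin n))
    (L : Matrix (∀ a, d a) (∀ a, d a) ℂ →ₗ[ℂ] Matrix (∀ a, d a) (∀ a, d a) ℂ) : Prop :=
  ∃ (m : ℕ) (Lk : Fin m → Matrix (nbhdIdx d N) (nbhdIdx d N) ℂ),
    L = lindbladMap 0 fun k => nbhdLift d N (Lk k)

/-- The family of neighborhood generators `Lj` is frustration free: every invariant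
state of the sum is invariant for each component. -/
def IsFFFamily {M : ℕ}
    (Lj : Fin M → (Matrix (∀ a, d a) (∀ a, d a) ℂ →ₗ[ℂ] Matrix (∀ a, d a) (∀ a, d a) ℂ)) :
    Prop :=
  ∀ ρ : Matrix (∀ a, d a) (∀ a, d a) ℂ, IsDensity ρ → (∑ j, Lj j) ρ = 0 → ∀ j, Lj j ρ = 0

/-- `ρ` is frustration-free quasi-locally stabilizable relative to the neighborhood
structure `Nb`. -/
def IsFFQLS {M : ℕ} (Nb : Fin M → Finset (Fin n))
    (ρ : Matrix (∀ a, d a) (∀ a, d a) ℂ) : Prop :=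
  ∃ Lj : Fin M → (Matrix (∀ a, d a) (∀ a, d a) ℂ →ₗ[ℂ] Matrix (∀ a, d a) (∀ a, d a) ℂ),
    (∀ j, IsNbhdGen d (Nb j) (Lj j)) ∧ IsFFFamily d Lj ∧ IsGAS (∑ j, Lj j) ρ

/-- A pure state `|ψ⟩⟨ψ|` is dissipatively quasi-locally stabilizable relative to `Nb`:
it is GAS for a QL generator whose components have zero Hamiltonian and neighborhood
noise operators annihilating `ψ`. -/
def IsDQLS {M : ℕ} (Nb : Fin M → Finset (Fin n)) (ψ : (∀ a, d a) → ℂ) : Prop :=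
  ∃ Lj : Fin M → (Matrix (∀ a, d a) (∀ a, d a) ℂ →ₗ[ℂ] Matrix (∀ a, d a) (∀ a, d a) ℂ),
    (∀ j, ∃ (m : ℕ) (Dk : Fin m → Matrix (nbhdIdx d (Nb j)) (nbhdIdx d (Nb j)) ℂ),
      Lj j = lindbladMap 0 (fun k => nbhdLift d (Nb j) (Dk k)) ∧
      ∀ k, (nbhdLift d (Nb j) (Dk k)).mulVec ψ = 0) ∧
    IsGAS (∑ j, Lj j) (Matrix.vecMulVec ψ (star ψ))

/-- The (vector) Schmidt span of `ψ` relative to the neighborhood factor `H_N`. -/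
def vecSchmidt (N : Finset (Fin n)) (ψ : (∀ a, d a) → ℂ) : Set (nbhdIdx d N → ℂ) :=
  {w | ∃ b : nbhdCoIdx d N → ℂ,
    w = fun i => ∑ k, (starRingEnd ℂ) (b k) * ψ ((splitEquiv d N).symm (i, k))}

/-- `Σ_N(ψ) ⊗ H_N̄` as a subspace of `H`. -/
noncomputable def extVecSchmidt (N : Finset (Fin n)) (ψ : (∀ a, d a) → ℂ) :
    Submodule ℂ ((∀ a, d a) → ℂ) :=
  Submodule.span ℂ {v | ∃ w ∈ vecSchmidt d N ψ, ∃ b : nbhdCoIdx d N → ℂ,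
    v = fun x => w ((splitEquiv d N) x).1 * b ((splitEquiv d N) x).2}

end Multipartite

/-! ### Auxiliary lemmas: fixed points of a Lindblad generator -/

universe u

section AuxSingle

set_option linter.unusedSectionVars false

variable {ι κ : Type*} [Fintype ι] [DecidableEq ι] [Fintype κ] [DecidableEq κ]

/-- Lindblad generator in effective-Hamiltonian form `K X + X K† + Σ L X L†`. -/
noncomputable def gen (K : Matrix ι ι ℂ) {m : ℕ} (L : Fin m → Matrix ι ι ℂ) :
    Matrix ι ι ℂ →ₗ[ℂ] Matrix ι ι ℂ :=
  LinearMap.mulLeft ℂ K + LinearMap.mulRight ℂ Kᴴ +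
    ∑ k, (LinearMap.mulRight ℂ (L k)ᴴ).comp (LinearMap.mulLeft ℂ (L k))

lemma gen_apply (K : Matrix ι ι ℂ) {m : ℕ} (L : Fin m → Matrix ι ι ℂ) (X : Matrix ι ι ℂ) :
    gen K L X = K * X + X * Kᴴ + ∑ k, L k * X * (L k)ᴴ := by
  simp [gen, LinearMap.sum_apply]

/-- effective Hamiltonian -/
noncomputable def effK (Hm : Matrix ι ι ℂ) {m : ℕ} (L : Fin m → Matrix ι ι ℂ) :
    Matrix ι ι ℂ := (-Complex.I) • Hm - ((1 : ℂ)/2) • ∑ k, (L k)ᴴ * L k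

lemma effK_conj (Hm : Matrix ι ι ℂ) (hH : Hm.IsHermitian) {m : ℕ} (L : Fin m → Matrix ι ι ℂ) :
    (effK Hm L)ᴴ = Complex.I • Hm - ((1 : ℂ)/2) • ∑ k, (L k)ᴴ * L k := by
  simp [effK, conjTranspose_sum, hH.eq, conjTranspose_smul]

lemma effK_add (Hm : Matrix ι ι ℂ) (hH : Hm.IsHermitian) {m : ℕ} (L : Fin m → Matrix ι ι ℂ) :
    effK Hm L + (effK Hm L)ᴴ + ∑ k, (L k)ᴴ * L k = 0 := by
  rw [effK_conj _ hH, effK]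
  module

lemma lindblad_eq_gen (Hm : Matrix ι ι ℂ) (hH : Hm.IsHermitian) {m : ℕ}
    (L : Fin m → Matrix ι ι ℂ) : lindbladMap Hm L = gen (effK Hm L) L := by
  ext1 X
  rw [gen_apply, effK_conj _ hH, effK]
  simp only [lindbladMap, LinearMap.add_apply, LinearMap.smul_apply, LinearMap.sub_apply,
    LinearMap.sum_apply, LinearMap.comp_apply, LinearMap.mulLeft_apply, LinearMap.mulRight_apply,
    sub_mul, mul_sub, smul_mul_assoc, mul_smul_comm, Finset.sum_sub_distrib, ← Finset.smul_sum,
    Finset.sum_add_distrib, ← Finset.sum_mul, ← Finset.mul_sum]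
  module

lemma gen_conj (K : Matrix ι ι ℂ) {m : ℕ} (L : Fin m → Matrix ι ι ℂ) (X : Matrix ι ι ℂ) :
    gen K L Xᴴ = (gen K L X)ᴴ := by
  simp only [gen_apply, conjTranspose_add, conjTranspose_mul, conjTranspose_sum,
    conjTranspose_conjTranspose, Matrix.mul_assoc]
  rw [add_comm (K * Xᴴ)]

/-- dual generator -/
noncomputable def dgen (K : Matrix ι ι ℂ) {m : ℕ} (L : Fin m → Matrix ι ι ℂ) :
    Matrix ι ι ℂ →ₗ[ℂ] Matrix ι ι ℂ := gen Kᴴ (fun k => (L k)ᴴ)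

lemma dgen_apply (K : Matrix ι ι ℂ) {m : ℕ} (L : Fin m → Matrix ι ι ℂ) (X : Matrix ι ι ℂ) :
    dgen K L X = Kᴴ * X + X * K + ∑ k, (L k)ᴴ * X * L k := by
  simp [dgen, gen_apply]

lemma dgen_trace (K : Matrix ι ι ℂ) {m : ℕ} (L : Fin m → Matrix ι ι ℂ) (X Y : Matrix ι ι ℂ) :
    (dgen K L X * Y).trace = (X * gen K L Y).trace := by
  simp only [dgen_apply, gen_apply, add_mul, mul_add, trace_add, Finset.sum_mul, Finset.mul_sum,
    trace_sum]
  have h1 : (Kᴴ * X * Y).trace = (X * (Y * Kᴴ)).trace := by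
    rw [Matrix.mul_assoc, trace_mul_comm, Matrix.mul_assoc]
  have h2 : ∀ k, ((L k)ᴴ * X * L k * Y).trace = (X * (L k * Y * (L k)ᴴ)).trace := by
    intro k
    rw [Matrix.mul_assoc, Matrix.mul_assoc, trace_mul_comm]
    simp only [Matrix.mul_assoc]
  rw [h1, Finset.sum_congr rfl fun k _ => h2 k, Matrix.mul_assoc X K Y]
  ring

lemma finrank_ker_dgen (K : Matrix ι ι ℂ) {m : ℕ} (L : Fin m → Matrix ι ι ℂ) :
    Module.finrank ℂ (LinearMap.ker (dgen K L)) = Module.finrank ℂ (LinearMap.ker (gen K L)) := by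
  let Φ : Matrix ι ι ℂ →ₗ[ℂ] Module.Dual ℂ (Matrix ι ι ℂ) :=
    LinearMap.mk₂ ℂ (fun X Y => (X * Y).trace) (by intros; simp [add_mul]) (by intros; simp)
      (by intros; simp [mul_add]) (by intros; simp)
  have hΦ : ∀ X Y, Φ X Y = (X * Y).trace := fun _ _ => rfl
  have hinj : Function.Injective Φ := by
    rw [injective_iff_map_eq_zero]
    intro X hX
    have : (X * Xᴴ).trace = 0 := by rw [← hΦ, hX]; rfl
    exact trace_mul_conjTranspose_self_eq_zero_iff.1 this
  let e := LinearEquiv.ofInjectiveOfFinrankEq Φ hinj (Subspace.dual_finrank_eq).symm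
  have he : ∀ X, e X = Φ X := fun _ => rfl
  have h1 : (gen K L).dualMap.comp Φ = Φ.comp (dgen K L) := by
    refine LinearMap.ext fun X => LinearMap.ext fun Y => ?_
    exact (dgen_trace K L X Y).symm
  have hr1 : Module.finrank ℂ (LinearMap.range (dgen K L)) =
      Module.finrank ℂ (LinearMap.range (gen K L)) := by
    rw [← LinearMap.finrank_range_dualMap_eq_finrank_range (gen K L)]
    have h2 : LinearMap.range (gen K L).dualMap = (LinearMap.range (dgen K L)).map Φ := by
      rw [← LinearMap.range_comp, ← h1, LinearMap.range_comp_of_range_eq_top]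
      rw [LinearMap.range_eq_top]
      exact e.surjective
    rw [h2]
    exact (LinearEquiv.finrank_eq (Submodule.equivMapOfInjective Φ hinj _))
  have a := LinearMap.finrank_range_add_finrank_ker (dgen K L)
  have b := LinearMap.finrank_range_add_finrank_ker (gen K L)
  omega

/-- The commutant of `K, K†, L, L†`. -/
def comm (K : Matrix ι ι ℂ) {m : ℕ} (L : Fin m → Matrix ι ι ℂ) : Submodule ℂ (Matrix ι ι ℂ) where
  carrier := {X | K * X = X * K ∧ Kᴴ * X = X * Kᴴ ∧ (∀ k, L k * X = X * L k) ∧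
    ∀ k, (L k)ᴴ * X = X * (L k)ᴴ}
  add_mem' := by
    rintro a b ⟨h1, h2, h3, h4⟩ ⟨g1, g2, g3, g4⟩
    refine ⟨?_, ?_, fun k => ?_, fun k => ?_⟩ <;> simp [mul_add, add_mul, *]
  zero_mem' := by simp
  smul_mem' := by
    rintro c a ⟨h1, h2, h3, h4⟩
    refine ⟨?_, ?_, fun k => ?_, fun k => ?_⟩ <;> simp [*]

lemma comm_mul {K : Matrix ι ι ℂ} {m : ℕ} {L : Fin m → Matrix ι ι ℂ} {X Y : Matrix ι ι ℂ}
    (hX : X ∈ comm K L) (hY : Y ∈ comm K L) : X * Y ∈ comm K L := by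
  obtain ⟨h1, h2, h3, h4⟩ := hX
  obtain ⟨g1, g2, g3, g4⟩ := hY
  refine ⟨?_, ?_, fun k => ?_, fun k => ?_⟩
  · rw [← Matrix.mul_assoc, h1, Matrix.mul_assoc, g1, Matrix.mul_assoc]
  · rw [← Matrix.mul_assoc, h2, Matrix.mul_assoc, g2, Matrix.mul_assoc]
  · rw [← Matrix.mul_assoc, h3, Matrix.mul_assoc, g3, Matrix.mul_assoc]
  · rw [← Matrix.mul_assoc, h4, Matrix.mul_assoc, g4, Matrix.mul_assoc]

lemma gen_comm_left {K : Matrix ι ι ℂ} {m : ℕ} {L : Fin m → Matrix ι ι ℂ} {X : Matrix ι ι ℂ}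
    (hX : X ∈ comm K L) (Y : Matrix ι ι ℂ) : gen K L (X * Y) = X * gen K L Y := by
  obtain ⟨h1, h2, h3, h4⟩ := hX
  simp only [gen_apply, mul_add, Finset.mul_sum, ← Matrix.mul_assoc, h1, h3]

lemma gen_comm_right {K : Matrix ι ι ℂ} {m : ℕ} {L : Fin m → Matrix ι ι ℂ} {X : Matrix ι ι ℂ}
    (hX : X ∈ comm K L) (Y : Matrix ι ι ℂ) : gen K L (Y * X) = gen K L Y * X := by
  obtain ⟨h1, h2, h3, h4⟩ := hX
  simp only [gen_apply, add_mul, Finset.sum_mul, Matrix.mul_assoc, h2, h4]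

lemma dissip_identity {K : Matrix ι ι ℂ} {m : ℕ} {L : Fin m → Matrix ι ι ℂ}
    (hK : K + Kᴴ + ∑ k, (L k)ᴴ * L k = 0) {X : Matrix ι ι ℂ} (hX : dgen K L X = 0) :
    ∑ k, (L k * X - X * L k)ᴴ * (L k * X - X * L k) = dgen K L (Xᴴ * X) := by
  have hX' : dgen K L Xᴴ = 0 := by rw [dgen, gen_conj]; rw [dgen] at hX; simp [hX]
  have e1 : ∑ k, (L k * X - X * L k)ᴴ * (L k * X - X * L k) =
      Xᴴ * (∑ k, (L k)ᴴ * L k) * X - Xᴴ * (∑ k, (L k)ᴴ * X * L k)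
        - (∑ k, (L k)ᴴ * Xᴴ * L k) * X + ∑ k, (L k)ᴴ * (Xᴴ * X) * L k := by
    simp only [Finset.mul_sum, Finset.sum_mul, ← Finset.sum_sub_distrib, ← Finset.sum_add_distrib]
    refine Finset.sum_congr rfl fun k _ => ?_
    simp only [conjTranspose_sub, conjTranspose_mul]
    noncomm_ring
  rw [dgen_apply] at hX hX'
  have a1 := eq_neg_of_add_eq_zero_right hK
  have a2 := eq_neg_of_add_eq_zero_right hX
  have a3 := eq_neg_of_add_eq_zero_right hX'
  rw [e1, dgen_apply, a1, a2, a3]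
  noncomm_ring

lemma diag_trace_zero {l : ι → ℝ} (hl : ∀ i, 0 < l i) {m : ℕ} (C : Fin m → Matrix ι ι ℂ)
    (h : ((∑ k, (C k)ᴴ * C k) * diagonal (fun i => (l i : ℂ))).trace = 0) : ∀ k, C k = 0 := by
  have h0 : ∑ k, ∑ i, ∑ j, Complex.normSq (C k j i) * l i = 0 := by
    have : ((∑ k, ∑ i, ∑ j, Complex.normSq (C k j i) * l i : ℝ) : ℂ) = 0 := by
      rw [← h]
      rw [Finset.sum_mul, trace_sum]
      push_cast
      refine Finset.sum_congr rfl fun k _ => ?_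
      simp only [trace, diag_apply, mul_diagonal]
      refine Finset.sum_congr rfl fun i _ => ?_
      rw [Matrix.mul_apply, Finset.sum_mul]
      refine Finset.sum_congr rfl fun j _ => ?_
      rw [conjTranspose_apply, Complex.normSq_eq_conj_mul_self]
      rfl
    exact_mod_cast this
  intro k
  have nn : ∀ k i j, 0 ≤ Complex.normSq (C k j i) * l i :=
    fun k i j => mul_nonneg (Complex.normSq_nonneg _) (hl i).le
  rw [Finset.sum_eq_zero_iff_of_nonneg
    (fun k _ => Finset.sum_nonneg fun i _ => Finset.sum_nonneg fun j _ => nn k i j)] at h0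
  have h1 := h0 k (Finset.mem_univ _)
  rw [Finset.sum_eq_zero_iff_of_nonneg (fun i _ => Finset.sum_nonneg fun j _ => nn k i j)] at h1
  ext j i
  have h2 := h1 i (Finset.mem_univ _)
  rw [Finset.sum_eq_zero_iff_of_nonneg (fun j _ => nn k i j)] at h2
  have h3 := h2 j (Finset.mem_univ _)
  have := (mul_eq_zero.1 h3).resolve_right (hl i).ne'
  simpa using this

lemma ker_dgen_le {K : Matrix ι ι ℂ} {m : ℕ} {L : Fin m → Matrix ι ι ℂ}
    (hK : K + Kᴴ + ∑ k, (L k)ᴴ * L k = 0) {l : ι → ℝ} (hl : ∀ i, 0 < l i)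
    (hρ : gen K L (diagonal (fun i => (l i : ℂ))) = 0) :
    LinearMap.ker (dgen K L) ≤ comm K L := by
  have key : ∀ X, dgen K L X = 0 → (∀ k, L k * X = X * L k) ∧ K * X = X * K := by
    intro X hX
    have h1 := dissip_identity hK hX
    have h2 : ∀ k, L k * X - X * L k = 0 := by
      apply diag_trace_zero hl
      rw [h1, dgen_trace, hρ]
      simp
    have h3 : ∀ k, L k * X = X * L k := fun k => sub_eq_zero.1 (h2 k)
    refine ⟨h3, ?_⟩
    rw [dgen_apply] at hX
    have : ∑ k, (L k)ᴴ * X * L k = (∑ k, (L k)ᴴ * L k) * X := by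
      rw [Finset.sum_mul]
      refine Finset.sum_congr rfl fun k _ => ?_
      rw [Matrix.mul_assoc, ← h3, Matrix.mul_assoc]
    rw [this, eq_neg_of_add_eq_zero_right hK] at hX
    have h5 : X * K - K * X = 0 := by
      rw [← hX]; noncomm_ring
    exact (sub_eq_zero.1 h5).symm
  intro X hX
  have hX : dgen K L X = 0 := hX
  have hX' : dgen K L Xᴴ = 0 := by rw [dgen, gen_conj]; rw [dgen] at hX; simp [hX]
  obtain ⟨a, b⟩ := key X hX
  obtain ⟨a', b'⟩ := key _ hX'
  refine ⟨b, ?_, a, fun k => ?_⟩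
  · have := congrArg conjTranspose b'
    simpa [conjTranspose_mul] using this.symm
  · have := congrArg conjTranspose (a' k)
    simpa [conjTranspose_mul] using this.symm

lemma ker_gen_eq {K : Matrix ι ι ℂ} {m : ℕ} {L : Fin m → Matrix ι ι ℂ}
    (hK : K + Kᴴ + ∑ k, (L k)ᴴ * L k = 0) {l : ι → ℝ} (hl : ∀ i, 0 < l i)
    (hρ : gen K L (diagonal (fun i => (l i : ℂ))) = 0) {Z : Matrix ι ι ℂ}
    (hZ : gen K L Z = 0) : ∃ X ∈ comm K L, Z = X * diagonal (fun i => (l i : ℂ)) := by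
  set D : Matrix ι ι ℂ := diagonal (fun i => (l i : ℂ)) with hD
  have hDD : D * diagonal (fun i => ((l i : ℂ))⁻¹) = 1 := by
    rw [hD, diagonal_mul_diagonal, ← diagonal_one]
    congr 1; ext i
    exact mul_inv_cancel₀ (by exact_mod_cast (hl i).ne')
  have hinj : Function.Injective (LinearMap.mulRight ℂ D) := by
    intro X Y h
    have h : X * D = Y * D := h
    have := congrArg (· * diagonal (fun i => ((l i : ℂ))⁻¹)) h
    simpa [Matrix.mul_assoc, hDD] using this
  have hle : (comm K L).map (LinearMap.mulRight ℂ D) ≤ LinearMap.ker (gen K L) := by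
    rintro _ ⟨X, hX, rfl⟩
    rw [LinearMap.mem_ker, LinearMap.mulRight_apply, gen_comm_left hX, hρ, mul_zero]
  have hfr : Module.finrank ℂ (LinearMap.ker (gen K L)) ≤
      Module.finrank ℂ ((comm K L).map (LinearMap.mulRight ℂ D)) := by
    rw [← finrank_ker_dgen,
      ← (LinearEquiv.finrank_eq (Submodule.equivMapOfInjective _ hinj (comm K L)))]
    exact Submodule.finrank_mono (ker_dgen_le hK hl hρ)
  have heq := Submodule.eq_of_le_of_finrank_le hle hfr
  have hm : Z ∈ (comm K L).map (LinearMap.mulRight ℂ D) := by rw [heq]; exact hZ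
  obtain ⟨X, hX, rfl⟩ := hm
  exact ⟨X, hX, rfl⟩

lemma modular_diag {l : ι → ℝ} (hl : ∀ i, 0 < l i) (S : Submodule ℂ (Matrix ι ι ℂ))
    (hS : ∀ Z ∈ S, diagonal (fun i => (l i : ℂ)) * Z * diagonal (fun i => ((l i : ℂ))⁻¹) ∈ S)
    (Z : Matrix ι ι ℂ) (hZ : Z ∈ S) :
    diagonal (fun i => (√(l i) : ℂ)) * Z * diagonal (fun i => ((√(l i) : ℂ))⁻¹) ∈ S := by
  classical
  let T : Module.End ℂ (Matrix ι ι ℂ) :=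
    (LinearMap.mulRight ℂ (diagonal (fun i => ((l i : ℂ))⁻¹))).comp
      (LinearMap.mulLeft ℂ (diagonal (fun i => (l i : ℂ))))
  have hT : ∀ X i j, T X i j = (l i / l j : ℂ) * X i j := by
    intro X i j
    simp only [T, LinearMap.comp_apply, LinearMap.mulRight_apply, LinearMap.mulLeft_apply,
      mul_diagonal, diagonal_mul]
    ring
  have hpow : ∀ (n : ℕ) X i j, (T ^ n) X i j = (l i / l j : ℂ) ^ n * X i j := by
    intro n
    induction n with
    | zero => simp
    | succ n ih => intro X i j; rw [pow_succ, Module.End.mul_apply, ih, hT]; ring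
  have hpoly : ∀ (p : Polynomial ℂ) X i j,
      (Polynomial.aeval T p) X i j = p.eval (l i / l j : ℂ) * X i j := by
    intro p X i j
    induction p using Polynomial.induction_on' with
    | add p q hp hq => simp [hp, hq, add_mul]
    | monomial n a => simp [Polynomial.aeval_monomial, hpow, mul_assoc]
  have hmem : ∀ (p : Polynomial ℂ) X, X ∈ S → (Polynomial.aeval T p) X ∈ S := by
    intro p X hX
    have hn : ∀ n : ℕ, (T ^ n) X ∈ S := by
      intro n
      induction n with
      | zero => simpa
      | succ n ih => rw [pow_succ', Module.End.mul_apply]; exact hS _ ih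
    induction p using Polynomial.induction_on' with
    | add p q hp hq => rw [map_add]; exact S.add_mem hp hq
    | monomial n a =>
      rw [Polynomial.aeval_monomial, Module.End.mul_apply]
      exact S.smul_mem _ (hn n)
  let s : Finset ℂ := Finset.univ.image (fun p : ι × ι => (l p.1 / l p.2 : ℂ))
  let p : Polynomial ℂ := Lagrange.interpolate s id (fun z => ((√ z.re : ℝ) : ℂ))
  have hp : ∀ i j, p.eval (l i / l j : ℂ) = (√(l i / l j) : ℝ) := by
    intro i j
    have := Lagrange.eval_interpolate_at_node (s := s) (v := id)
      (fun z => ((√ z.re : ℝ) : ℂ)) (Function.injective_id.injOn) (i := (l i / l j : ℂ))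
      (Finset.mem_image.2 ⟨(i, j), Finset.mem_univ _, rfl⟩)
    rw [id] at this
    rw [this]
    congr 2
    rw [← Complex.ofReal_div, Complex.ofReal_re]
  convert hmem p Z hZ using 1
  ext i j
  rw [hpoly, hp, Real.sqrt_div (hl i).le]
  simp only [mul_diagonal, diagonal_mul]
  push_cast
  ring

lemma mpinv_eq {A B : Matrix ι ι ℂ} (h1 : A * B * A = A) (h2 : B * A * B = B)
    (h3 : (A * B)ᴴ = A * B) (h4 : (B * A)ᴴ = B * A) : mpinv A = B := by
  have hex : ∃ B : Matrix ι ι ℂ,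
      A * B * A = A ∧ B * A * B = B ∧ (A * B)ᴴ = A * B ∧ (B * A)ᴴ = B * A := ⟨B, h1, h2, h3, h4⟩
  rw [mpinv, dif_pos hex]
  obtain ⟨g1, g2, g3, g4⟩ := hex.choose_spec
  set C := hex.choose
  have e1 : A * B = A * C := by
    have : A * B = (A * C) * (A * B) := by rw [← Matrix.mul_assoc, g1]
    have := congrArg conjTranspose this
    rw [conjTranspose_mul (A * C), h3, g3, ← Matrix.mul_assoc, h1] at this
    exact this
  have e2 : B * A = C * A := by
    have : B * A = (B * A) * (C * A) := by
      rw [Matrix.mul_assoc, ← Matrix.mul_assoc A, g1]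
    have := congrArg conjTranspose this
    rw [conjTranspose_mul (B * A), h4, g4, Matrix.mul_assoc, ← Matrix.mul_assoc A, h1] at this
    exact this
  calc C = C * A * C := g2.symm
    _ = B * (A * C) := by rw [← e2, Matrix.mul_assoc]
    _ = B := by rw [← e1, ← Matrix.mul_assoc, h2]

section sq
open scoped MatrixOrder Matrix.Norms.L2Operator

lemma psd_sq_unique {B C : Matrix ι ι ℂ} (hB : B.PosSemidef) (hC : C.PosSemidef)
    (h : B * B = C * C) : B = C := by
  rw [← CFC.sqrt_unique h (Matrix.nonneg_iff_posSemidef.2 hB),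
    CFC.sqrt_unique rfl (Matrix.nonneg_iff_posSemidef.2 hC)]

lemma span_psd : Submodule.span ℂ {A : Matrix ι ι ℂ | A.PosSemidef} = ⊤ := by
  have := CStarAlgebra.span_nonneg (A := Matrix ι ι ℂ)
  simpa only [Matrix.nonneg_iff_posSemidef] using this

end sq

lemma msqrt_eq {A B : Matrix ι ι ℂ} (hB : B.PosSemidef) (h : B * B = A) : msqrt A = B := by
  have hex : ∃ B : Matrix ι ι ℂ, B.PosSemidef ∧ B * B = A := ⟨B, hB, h⟩
  rw [msqrt, dif_pos hex]
  exact psd_sq_unique hex.choose_spec.1 hB (hex.choose_spec.2.trans h.symm)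

lemma exists_isometry {ι : Type u} [Fintype ι] [DecidableEq ι] {ρ : Matrix ι ι ℂ}
    (hρ : ρ.PosSemidef) :
    ∃ (κ : Type u) (_ : Fintype κ) (_ : DecidableEq κ) (V : Matrix ι κ ℂ) (l : κ → ℝ),
      (∀ i, 0 < l i) ∧ Vᴴ * V = 1 ∧ ρ = V * diagonal (fun i => (l i : ℂ)) * Vᴴ := by
  classical
  set e := hρ.1.eigenvalues with he
  set U : Matrix ι ι ℂ := (hρ.1.eigenvectorUnitary : Matrix ι ι ℂ) with hU
  refine ⟨{i // e i ≠ 0}, inferInstance, inferInstance, U.submatrix id Subtype.val,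
    fun i => e i, fun i => ?_, ?_, ?_⟩
  · exact lt_of_le_of_ne (hρ.eigenvalues_nonneg i) (Ne.symm i.2)
  · have hUU : Uᴴ * U = 1 := Unitary.coe_star_mul_self hρ.1.eigenvectorUnitary
    ext i j
    have := congrFun (congrFun hUU i.1) j.1
    simp only [Matrix.mul_apply, conjTranspose_apply, submatrix_apply, id] at this ⊢
    rw [this, Matrix.one_apply, Matrix.one_apply]
    simp [Subtype.ext_iff]
  · have hs := hρ.1.spectral_theorem
    rw [Unitary.conjStarAlgAut_apply] at hs
    ext i j
    have hij := congrFun (congrFun hs i) j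
    rw [hij]
    simp only [Matrix.mul_apply (M := _ * _), mul_diagonal, conjTranspose_apply, submatrix_apply,
      id, star_apply, Function.comp]
    have h1 := Finset.sum_subtype (F := inferInstance) (Finset.univ.filter (fun i => e i ≠ 0)) (p := fun i => e i ≠ 0)
      (by simp) (fun k => U i k * (e k : ℂ) * star (U j k))
    have h2 := Finset.sum_filter_of_ne (s := Finset.univ) (p := fun i => e i ≠ 0)
      (f := fun k => U i k * (e k : ℂ) * star (U j k)) (by
        intro k _ hk hek
        exact hk (by simp [hek]))
    exact h2.symm.trans h1

lemma gen_reduce {ρ : Matrix ι ι ℂ} {K : Matrix ι ι ℂ} {m : ℕ} {L : Fin m → Matrix ι ι ℂ}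
    {V : Matrix ι κ ℂ} {l : κ → ℝ} (hl : ∀ i, 0 < l i) (hV : Vᴴ * V = 1)
    (hVρ : ρ = V * diagonal (fun i => (l i : ℂ)) * Vᴴ) (hρ : gen K L ρ = 0) :
    (∀ k, V * (Vᴴ * L k * V) = L k * V) ∧ V * (Vᴴ * K * V) = K * V := by
  set D : Matrix κ κ ℂ := diagonal (fun i => (l i : ℂ)) with hD
  set R : Matrix κ κ ℂ := diagonal (fun i => (√(l i) : ℂ)) with hR
  have hRR : R * Rᴴ = D := by
    rw [hR, hD, diagonal_conjTranspose, diagonal_mul_diagonal]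
    congr 1; ext i
    simp only [Pi.star_apply, Complex.star_def, Complex.conj_ofReal]
    exact_mod_cast Real.mul_self_sqrt (hl i).le
  have hRinv : R * diagonal (fun i => ((√(l i) : ℂ))⁻¹) = 1 := by
    rw [hR, diagonal_mul_diagonal, ← diagonal_one]
    congr 1; ext i
    exact mul_inv_cancel₀ (by exact_mod_cast (Real.sqrt_pos.2 (hl i)).ne')
  have hDinv : D * diagonal (fun i => ((l i : ℂ))⁻¹) = 1 := by
    rw [hD, diagonal_mul_diagonal, ← diagonal_one]
    congr 1; ext i
    exact mul_inv_cancel₀ (by exact_mod_cast (hl i).ne')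
  set Q : Matrix ι ι ℂ := 1 - V * Vᴴ with hQ
  have hQh : Qᴴ = Q := by simp [hQ, conjTranspose_mul]
  have hQV : Q * V = 0 := by rw [hQ, Matrix.sub_mul, Matrix.mul_assoc, hV]; simp
  have hVQ : Vᴴ * Q = 0 := by
    rw [← hQh, ← conjTranspose_mul, hQV, conjTranspose_zero]
  have hρQ : ρ * Q = 0 := by rw [hVρ, Matrix.mul_assoc, hVQ, Matrix.mul_zero]
  have hQρ : Q * ρ = 0 := by rw [hVρ, Matrix.mul_assoc, ← Matrix.mul_assoc, hQV, Matrix.zero_mul]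
  have hG : ∀ k, Q * L k * V = 0 := by
    have e1 : ∑ k, (Q * L k * V * R) * (Q * L k * V * R)ᴴ = Q * gen K L ρ * Q := by
      rw [gen_apply]
      simp only [Matrix.mul_add, Matrix.add_mul, Matrix.mul_sum, Matrix.sum_mul]
      have a1 : Q * (K * ρ) * Q = 0 := by simp only [Matrix.mul_assoc, hρQ, Matrix.mul_zero]
      have a2 : Q * (ρ * Kᴴ) * Q = 0 := by rw [← Matrix.mul_assoc Q, hQρ]; simp
      rw [a1, a2, zero_add, zero_add]
      refine Finset.sum_congr rfl fun k _ => ?_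
      rw [hVρ, ← hRR]
      simp only [conjTranspose_mul, hQh, Matrix.mul_assoc]
    rw [hρ, Matrix.mul_zero, Matrix.zero_mul] at e1
    have e2 := congrArg trace e1
    rw [trace_sum, trace_zero, Finset.sum_eq_zero_iff_of_nonneg
      (fun k _ => (posSemidef_self_mul_conjTranspose _).trace_nonneg)] at e2
    intro k
    have e3 := trace_mul_conjTranspose_self_eq_zero_iff.1 (e2 k (Finset.mem_univ _))
    have := congrArg (· * diagonal (fun i => ((√(l i) : ℂ))⁻¹)) e3
    simpa [Matrix.mul_assoc, hRinv] using this
  have hGK : Q * K * V = 0 := by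
    have e1 : Q * gen K L ρ = Q * K * V * D * Vᴴ := by
      rw [gen_apply]
      simp only [Matrix.mul_add, Matrix.mul_sum]
      have a2 : Q * (ρ * Kᴴ) = 0 := by rw [← Matrix.mul_assoc Q, hQρ]; simp
      have a3 : ∀ k, Q * (L k * ρ * (L k)ᴴ) = 0 := by
        intro k
        have : Q * (L k * ρ * (L k)ᴴ) = Q * L k * V * (D * Vᴴ * (L k)ᴴ) := by
          rw [hVρ]; simp only [Matrix.mul_assoc]
        rw [this, hG, Matrix.zero_mul]
      rw [a2, Finset.sum_eq_zero fun k _ => a3 k, hVρ]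
      simp only [Matrix.mul_assoc, add_zero]
    rw [hρ, Matrix.mul_zero] at e1
    have := congrArg (· * V * diagonal (fun i => ((l i : ℂ))⁻¹)) e1.symm
    simpa [Matrix.mul_assoc, hDinv, hV] using this
  constructor
  · intro k
    have := hG k
    rw [hQ, Matrix.sub_mul, Matrix.sub_mul, Matrix.one_mul, sub_eq_zero] at this
    rw [this]; simp only [Matrix.mul_assoc]
  · have := hGK
    rw [hQ, Matrix.sub_mul, Matrix.sub_mul, Matrix.one_mul, sub_eq_zero] at this
    rw [this]; simp only [Matrix.mul_assoc]

lemma Fdist_le {ι : Type u} [Fintype ι] [DecidableEq ι] {ρ : Matrix ι ι ℂ} (hpsd : ρ.PosSemidef)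
    {K : Matrix ι ι ℂ} {m : ℕ} {L : Fin m → Matrix ι ι ℂ}
    (hK : K + Kᴴ + ∑ k, (L k)ᴴ * L k = 0) (hρ : gen K L ρ = 0) {W : Set (Matrix ι ι ℂ)}
    (hW : ∀ A ∈ W, gen K L A = 0)
    (hW' : ∀ A ∈ W, ∀ Q : Matrix ι ι ℂ, Qᴴ = Q → ρ * Q = 0 → A * Q = 0 ∧ Q * A = 0) :
    Fdist ρ W ≤ LinearMap.ker (gen K L) := by
  obtain ⟨κ, _, _, V, l, hl, hV, hVρ⟩ := exists_isometry hpsd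
  obtain ⟨hLV, hKV⟩ := gen_reduce hl hV hVρ hρ
  set L' : Fin m → Matrix κ κ ℂ := fun k => Vᴴ * L k * V with hL'
  set K' : Matrix κ κ ℂ := Vᴴ * K * V with hK'
  set D : Matrix κ κ ℂ := diagonal (fun i => (l i : ℂ)) with hD
  have hLV : ∀ k, V * L' k = L k * V := hLV
  have hcancel : ∀ Y Z : Matrix κ κ ℂ, V * Y * Vᴴ = V * Z * Vᴴ → Y = Z := by
    intro Y Z h
    have := congrArg (fun X => Vᴴ * X * V) h
    simpa [Matrix.mul_assoc, hV, ← Matrix.mul_assoc Vᴴ V] using this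
  have hLVc : ∀ k, (L' k)ᴴ * Vᴴ = Vᴴ * (L k)ᴴ := by
    intro k
    rw [← conjTranspose_mul, hLV, conjTranspose_mul]
  have hKVc : K'ᴴ * Vᴴ = Vᴴ * Kᴴ := by
    rw [← conjTranspose_mul, hKV, conjTranspose_mul]
  have hgen : ∀ Y, gen K L (V * Y * Vᴴ) = V * gen K' L' Y * Vᴴ := by
    intro Y
    rw [gen_apply, gen_apply]
    simp only [Matrix.mul_add, Matrix.add_mul, Matrix.mul_sum, Matrix.sum_mul]
    congr 1
    · congr 1
      · simp only [← Matrix.mul_assoc]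
        rw [← hKV]
      · simp only [Matrix.mul_assoc]
        rw [← hKVc]
    · refine Finset.sum_congr rfl fun k _ => ?_
      have : L k * (V * Y * Vᴴ) * (L k)ᴴ = (L k * V) * Y * (Vᴴ * (L k)ᴴ) := by
        simp only [Matrix.mul_assoc]
      rw [this, ← hLV, ← hLVc]
      simp only [Matrix.mul_assoc]
  have hKK : K' + K'ᴴ + ∑ k, (L' k)ᴴ * L' k = 0 := by
    have e := congrArg (fun X => Vᴴ * X * V) hK
    simp only [Matrix.mul_add, Matrix.add_mul, Matrix.mul_sum, Matrix.sum_mul, Matrix.mul_zero, Matrix.zero_mul] at e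
    rw [← e]
    congr 1
    · congr 1
      rw [hK']
      simp only [conjTranspose_mul, conjTranspose_conjTranspose, Matrix.mul_assoc]
    · refine Finset.sum_congr rfl fun k _ => ?_
      have : Vᴴ * ((L k)ᴴ * L k) * V = (Vᴴ * (L k)ᴴ) * (L k * V) := by
        simp only [Matrix.mul_assoc]
      rw [this, ← hLVc, ← hLV, Matrix.mul_assoc, ← Matrix.mul_assoc Vᴴ, hV, Matrix.one_mul]
  have hρ' : gen K' L' D = 0 := by
    apply hcancel
    rw [← hgen, ← hVρ, hρ]; simp
  have hDinv : D * diagonal (fun i => ((l i : ℂ))⁻¹) = 1 := by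
    rw [hD, diagonal_mul_diagonal, ← diagonal_one]
    congr 1; ext i
    exact mul_inv_cancel₀ (by exact_mod_cast (hl i).ne')
  have hDinv' : diagonal (fun i => ((l i : ℂ))⁻¹) * D = 1 := by
    rw [hD, diagonal_mul_diagonal, ← diagonal_one]
    congr 1; ext i
    exact inv_mul_cancel₀ (by exact_mod_cast (hl i).ne')
  -- conjugation product rule
  have hmul : ∀ Y Z : Matrix κ κ ℂ, (V * Y * Vᴴ) * (V * Z * Vᴴ) = V * (Y * Z) * Vᴴ := by
    intro Y Z
    have : (V * Y * Vᴴ) * (V * Z * Vᴴ) = V * Y * (Vᴴ * V) * (Z * Vᴴ) := by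
      simp only [Matrix.mul_assoc]
    rw [this, hV, Matrix.mul_one]
    simp only [Matrix.mul_assoc]
  have hpinv : ∀ A B : Matrix κ κ ℂ, A * B = 1 → B * A = 1 →
      mpinv (V * A * Vᴴ) = V * B * Vᴴ := by
    intro A B h1 h2
    apply mpinv_eq
    · rw [hmul, hmul, h1, Matrix.one_mul]
    · rw [hmul, hmul, h2, Matrix.one_mul]
    · rw [hmul, h1, Matrix.mul_one, conjTranspose_mul, conjTranspose_conjTranspose]
    · rw [hmul, h2, Matrix.mul_one, conjTranspose_mul, conjTranspose_conjTranspose]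
  have hm1 : mpinv ρ = V * diagonal (fun i => ((l i : ℂ))⁻¹) * Vᴴ := by
    rw [hVρ]; exact hpinv _ _ hDinv hDinv'
  have hs : msqrt ρ = V * diagonal (fun i => (√(l i) : ℂ)) * Vᴴ := by
    apply msqrt_eq
    · apply PosSemidef.mul_mul_conjTranspose_same
      apply PosSemidef.diagonal
      intro i
      have := Real.sqrt_nonneg (l i)
      simpa using this
    · rw [hmul, hVρ, hD, diagonal_mul_diagonal]
      congr 3; ext i
      exact_mod_cast Real.mul_self_sqrt (hl i).le
  have hm2 : mpinv (msqrt ρ) = V * diagonal (fun i => ((√(l i) : ℂ))⁻¹) * Vᴴ := by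
    rw [hs]
    apply hpinv
    · rw [diagonal_mul_diagonal, ← diagonal_one]
      congr 1; ext i
      exact mul_inv_cancel₀ (by exact_mod_cast (Real.sqrt_pos.2 (hl i)).ne')
    · rw [diagonal_mul_diagonal, ← diagonal_one]
      congr 1; ext i
      exact inv_mul_cancel₀ (by exact_mod_cast (Real.sqrt_pos.2 (hl i)).ne')
  let Ψ : Matrix κ κ ℂ →ₗ[ℂ] Matrix ι ι ℂ :=
    { toFun := fun Y => V * Y * Vᴴ
      map_add' := by intros; simp [Matrix.mul_add, Matrix.add_mul]
      map_smul' := by intros; simp }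
  have hΨ : ∀ Y, Ψ Y = V * Y * Vᴴ := fun _ => rfl
  have hSle : (LinearMap.ker (gen K' L')).map Ψ ≤ LinearMap.ker (gen K L) := by
    rintro _ ⟨Y, hY, rfl⟩
    have hY : gen K' L' Y = 0 := hY
    rw [LinearMap.mem_ker, hΨ, hgen, hY]; simp
  refine le_trans (sInf_le ⟨?_, ?_, ?_, ?_⟩) hSle
  · intro A hA
    obtain ⟨q1, q2⟩ := hW' A hA (1 - V * Vᴴ) (by simp [conjTranspose_mul])
      (by rw [Matrix.mul_sub, Matrix.mul_one, hVρ, Matrix.mul_assoc _ Vᴴ, ← Matrix.mul_assoc Vᴴ, hV, Matrix.one_mul,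
            sub_self])
    rw [Matrix.mul_sub, Matrix.mul_one, sub_eq_zero] at q1
    rw [Matrix.sub_mul, Matrix.one_mul, sub_eq_zero] at q2
    have hA' : A = V * (Vᴴ * A * V) * Vᴴ := by
      have : V * (Vᴴ * A * V) * Vᴴ = V * Vᴴ * (A * (V * Vᴴ)) := by simp only [Matrix.mul_assoc]
      rw [this, ← q1, ← q2]
    refine ⟨Vᴴ * A * V, ?_, hA'.symm⟩
    apply hcancel
    rw [← hgen, ← hA', hW A hA]; simp
  · rintro _ ⟨Y, hY, rfl⟩
    refine ⟨Yᴴ, ?_, ?_⟩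
    · have hY : gen K' L' Y = 0 := hY
      show gen K' L' Yᴴ = 0
      rw [gen_conj, hY, conjTranspose_zero]
    · simp [hΨ, conjTranspose_mul, Matrix.mul_assoc]
  · rintro _ ⟨Y, hY, rfl⟩ _ ⟨Z, hZ, rfl⟩
    obtain ⟨A, hA, hAY⟩ := ker_gen_eq hKK hl hρ' hY
    obtain ⟨B, hB, hBZ⟩ := ker_gen_eq hKK hl hρ' hZ
    rw [← hD] at hAY hBZ
    subst hAY hBZ
    refine ⟨A * B * D, ?_, ?_⟩
    · show gen K' L' _ = 0
      rw [gen_comm_left (comm_mul hA hB), hρ', Matrix.mul_zero]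
    · rw [hm1, hΨ, hΨ, hΨ, hmul, hmul, Matrix.mul_assoc A D, hDinv, Matrix.mul_one, Matrix.mul_assoc A]
  · rintro _ ⟨Y, hY, rfl⟩
    refine ⟨diagonal (fun i => (√(l i) : ℂ)) * Y * diagonal (fun i => ((√(l i) : ℂ))⁻¹), ?_, ?_⟩
    · refine modular_diag hl _ ?_ Y hY
      intro Z hZ
      obtain ⟨A, hA, rfl⟩ := ker_gen_eq hKK hl hρ' hZ
      show gen K' L' _ = 0
      rw [Matrix.mul_assoc, Matrix.mul_assoc A, hDinv, Matrix.mul_one, gen_comm_right hA, hρ', Matrix.zero_mul]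
    · rw [hm2, hs, hΨ, hΨ, hmul, hmul]

section gas

lemma exists_flow {V : Type*} [NormedAddCommGroup V] [NormedSpace ℂ V] [FiniteDimensional ℂ V]
    (L : V →ₗ[ℂ] V) : ∃ E : ℝ → V →ₗ[ℂ] V, (∀ Y, E 0 Y = Y) ∧
      (∀ (f : V →ₗ[ℂ] ℂ) Y (t : ℝ), HasDerivAt (fun s : ℝ => f (E s Y)) (f (L (E t Y))) t) ∧
      (∀ (f : V →ₗ[ℂ] ℂ) Y (t : ℝ), HasDerivAt (fun s : ℝ => f (E s Y)) (f (E t (L Y))) t) := by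
  haveI : CompleteSpace V := FiniteDimensional.complete ℂ V
  let A : V →L[ℂ] V := LinearMap.toContinuousLinearMap L
  let φ : (V →ₗ[ℂ] ℂ) → V → ((V →L[ℂ] V) →L[ℂ] ℂ) := fun f Y =>
    (LinearMap.toContinuousLinearMap f).comp (ContinuousLinearMap.apply ℂ V Y)
  refine ⟨fun t => (NormedSpace.exp ((t : ℂ) • A) : V →L[ℂ] V), ?_, ?_, ?_⟩
  · intro Y; simp
  · intro f Y t
    have h1 := hasDerivAt_exp_smul_const' (𝕂 := ℂ) A (t : ℂ)
    have h2 := (φ f Y).hasFDerivAt.comp_hasDerivAt (t : ℂ) h1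
    exact h2.comp_ofReal
  · intro f Y t
    have h1 := hasDerivAt_exp_smul_const (𝕂 := ℂ) A (t : ℂ)
    have h2 := (φ f Y).hasFDerivAt.comp_hasDerivAt (t : ℂ) h1
    exact h2.comp_ofReal

lemma exists_flow_matrix (L : Matrix ι ι ℂ →ₗ[ℂ] Matrix ι ι ℂ) :
    ∃ E : ℝ → Matrix ι ι ℂ →ₗ[ℂ] Matrix ι ι ℂ, (∀ Y, E 0 Y = Y) ∧
      (∀ Y i j (t : ℝ), HasDerivAt (fun s : ℝ => E s Y i j) (L (E t Y) i j) t) ∧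
      (∀ Y i j (t : ℝ), HasDerivAt (fun s : ℝ => E s Y i j) (E t (L Y) i j) t) := by
  have h := exists_flow (V := ι → ι → ℂ) L
  obtain ⟨E, h0, h1, h2⟩ := h
  let f : ι → ι → (ι → ι → ℂ) →ₗ[ℂ] ℂ := fun i j =>
    { toFun := fun T => T i j
      map_add' := by intros; rfl
      map_smul' := by intros; rfl }
  exact ⟨E, h0, fun Y i j t => h1 (f i j) Y t, fun Y i j t => h2 (f i j) Y t⟩

lemma gas_ker {ρ : Matrix ι ι ℂ} {L : Matrix ι ι ℂ →ₗ[ℂ] Matrix ι ι ℂ} (h : IsGAS L ρ)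
    {X : Matrix ι ι ℂ} (hX : L X = 0) : X = X.trace • ρ := by
  obtain ⟨E, hE0, hd1, hd2⟩ := exists_flow_matrix L
  have hconst : ∀ t i j, E t X i j = X i j := by
    intro t i j
    have h1 : ∀ s : ℝ, HasDerivAt (fun s : ℝ => E s X i j) 0 s := by
      intro s
      have := hd2 X i j s
      rw [hX] at this
      simpa using this
    have := is_const_of_deriv_eq_zero (fun s => (h1 s).differentiableAt)
      (fun s => (h1 s).deriv) t 0
    rw [this, hE0]
  have hlim : ∀ Y : Matrix ι ι ℂ, ∀ i j,
      Filter.Tendsto (fun t => E t Y i j) Filter.atTop (nhds (Y.trace * ρ i j)) := by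
    intro Y
    have hY : Y ∈ Submodule.span ℂ {A : Matrix ι ι ℂ | A.PosSemidef} := by
      rw [span_psd]; trivial
    induction hY using Submodule.span_induction with
    | zero => intro i j; simp
    | add Y Z _ _ hY hZ =>
      intro i j
      simpa [add_mul] using (hY i j).add (hZ i j)
    | smul c Y _ hY =>
      intro i j
      simpa [mul_assoc] using (hY i j).const_mul c
    | mem Y hY =>
      have hY : Y.PosSemidef := hY
      intro i j
      by_cases h0 : Y.trace = 0
      · have : Y = 0 := hY.trace_eq_zero_iff.1 h0
        subst this
        simp
      · have hpos : 0 ≤ Y.trace := hY.trace_nonneg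
        have hinv : 0 ≤ (Y.trace)⁻¹ := inv_nonneg.2 hpos
        have hden : IsDensity ((Y.trace)⁻¹ • Y) := by
          refine ⟨hY.smul hinv, ?_⟩
          rw [trace_smul, smul_eq_mul, inv_mul_cancel₀ h0]
        have := h.2 _ hden (fun t => E t ((Y.trace)⁻¹ • Y)) (hE0 _)
          (fun t i j => hd1 _ i j t) i j
        have h2 := this.const_mul Y.trace
        refine h2.congr fun t => ?_
        rw [map_smul, Matrix.smul_apply, smul_eq_mul, ← mul_assoc, mul_inv_cancel₀ h0, one_mul]
  ext i j
  have h1 := hlim X i j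
  simp only [hconst] at h1
  exact tendsto_nhds_unique tendsto_const_nhds h1

end gas


section psdfactor
open scoped ComplexOrder MatrixOrder Matrix.Norms.L2Operator

lemma psd_factor {A : Matrix ι ι ℂ} (hA : A.PosSemidef) : ∃ C : Matrix ι ι ℂ, A = Cᴴ * C :=
  CStarAlgebra.nonneg_iff_eq_star_mul_self.mp hA.nonneg

end psdfactor

end AuxSingle

section AuxMulti

variable {n : ℕ} {d : Fin n → Type u} [∀ a, Fintype (d a)] [∀ a, DecidableEq (d a)]

lemma splitLift_mul (N : Finset (Fin n)) (A A' : Matrix (nbhdIdx d N) (nbhdIdx d N) ℂ)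
    (B B' : Matrix (nbhdCoIdx d N) (nbhdCoIdx d N) ℂ) :
    splitLift d N A B * splitLift d N A' B' = splitLift d N (A * A') (B * B') := by
  rw [splitLift, splitLift, splitLift, submatrix_mul_equiv]
  congr 1
  exact (Matrix.mul_kronecker_mul A A' B B').symm

lemma splitLift_conj (N : Finset (Fin n)) (A : Matrix (nbhdIdx d N) (nbhdIdx d N) ℂ)
    (B : Matrix (nbhdCoIdx d N) (nbhdCoIdx d N) ℂ) :
    (splitLift d N A B)ᴴ = splitLift d N Aᴴ Bᴴ := by
  ext i j
  simp [splitLift]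

lemma splitLift_add (N : Finset (Fin n)) (A A' : Matrix (nbhdIdx d N) (nbhdIdx d N) ℂ)
    (B : Matrix (nbhdCoIdx d N) (nbhdCoIdx d N) ℂ) :
    splitLift d N (A + A') B = splitLift d N A B + splitLift d N A' B := by
  ext i j
  simp [splitLift, add_mul]

lemma splitLift_smul (N : Finset (Fin n)) (c : ℂ) (A : Matrix (nbhdIdx d N) (nbhdIdx d N) ℂ)
    (B : Matrix (nbhdCoIdx d N) (nbhdCoIdx d N) ℂ) :
    splitLift d N (c • A) B = c • splitLift d N A B := by
  ext i j
  simp [splitLift, mul_assoc]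

lemma splitLift_zero (N : Finset (Fin n)) (B : Matrix (nbhdCoIdx d N) (nbhdCoIdx d N) ℂ) :
    splitLift d N 0 B = 0 := by
  ext i j
  simp [splitLift]

lemma splitLift_sum (N : Finset (Fin n)) {m : ℕ}
    (A : Fin m → Matrix (nbhdIdx d N) (nbhdIdx d N) ℂ)
    (B : Matrix (nbhdCoIdx d N) (nbhdCoIdx d N) ℂ) :
    splitLift d N (∑ k, A k) B = ∑ k, splitLift d N (A k) B := by
  ext i j
  simp [splitLift, Matrix.sum_apply, Finset.sum_mul]

lemma nbhdPtrace_add (N : Finset (Fin n)) (X Y : Matrix (∀ a, d a) (∀ a, d a) ℂ) :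
    nbhdPtrace d N (X + Y) = nbhdPtrace d N X + nbhdPtrace d N Y := by
  ext i j
  simp [nbhdPtrace, Finset.sum_add_distrib]

lemma nbhdPtrace_zero (N : Finset (Fin n)) :
    nbhdPtrace d N (0 : Matrix (∀ a, d a) (∀ a, d a) ℂ) = 0 := by
  ext i j
  simp [nbhdPtrace]

lemma nbhdPtrace_sum (N : Finset (Fin n)) {m : ℕ}
    (X : Fin m → Matrix (∀ a, d a) (∀ a, d a) ℂ) :
    nbhdPtrace d N (∑ k, X k) = ∑ k, nbhdPtrace d N (X k) := by
  ext i j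
  simp only [nbhdPtrace, of_apply, Matrix.sum_apply]
  rw [Finset.sum_comm]

lemma nbhdPtrace_mul_right (N : Finset (Fin n)) (X : Matrix (∀ a, d a) (∀ a, d a) ℂ)
    (Q : Matrix (nbhdIdx d N) (nbhdIdx d N) ℂ) :
    nbhdPtrace d N (X * nbhdLift d N Q) = nbhdPtrace d N X * Q := by
  ext i j
  simp only [nbhdPtrace, of_apply, Matrix.mul_apply, nbhdLift, splitLift, submatrix_apply,
    Equiv.apply_symm_apply, kroneckerMap_apply, Finset.sum_mul]
  rw [Finset.sum_comm]
  simp only [← (splitEquiv d N).symm.sum_comp, Fintype.sum_prod_type, Equiv.apply_symm_apply,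
    Matrix.one_apply]
  simp
  try rw [Finset.sum_comm]

lemma nbhdPtrace_mul_left (N : Finset (Fin n)) (X : Matrix (∀ a, d a) (∀ a, d a) ℂ)
    (Q : Matrix (nbhdIdx d N) (nbhdIdx d N) ℂ) :
    nbhdPtrace d N (nbhdLift d N Q * X) = Q * nbhdPtrace d N X := by
  ext i j
  simp only [nbhdPtrace, of_apply, Matrix.mul_apply, nbhdLift, splitLift, submatrix_apply,
    Equiv.apply_symm_apply, kroneckerMap_apply, Finset.mul_sum]
  rw [Finset.sum_comm]
  simp only [← (splitEquiv d N).symm.sum_comp, Fintype.sum_prod_type, Equiv.apply_symm_apply,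
    Matrix.one_apply]
  simp
  try rw [Finset.sum_comm]

lemma nbhdPtrace_trace (N : Finset (Fin n)) (X : Matrix (∀ a, d a) (∀ a, d a) ℂ) :
    (nbhdPtrace d N X).trace = X.trace := by
  simp only [trace, diag_apply, nbhdPtrace, of_apply]
  rw [← (splitEquiv d N).symm.sum_comp, Fintype.sum_prod_type]

lemma nbhdPtrace_psd (N : Finset (Fin n)) {X : Matrix (∀ a, d a) (∀ a, d a) ℂ}
    (hX : X.PosSemidef) : (nbhdPtrace d N X).PosSemidef := by
  have : nbhdPtrace d N X = ∑ k : nbhdCoIdx d N,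
      X.submatrix (fun i => (splitEquiv d N).symm (i, k)) (fun i => (splitEquiv d N).symm (i, k)) := by
    ext i j
    simp [nbhdPtrace, Matrix.sum_apply]
  rw [this]
  exact posSemidef_sum _ fun k _ => hX.submatrix _

lemma coLift_comm (N : Finset (Fin n)) (B : Matrix (nbhdCoIdx d N) (nbhdCoIdx d N) ℂ)
    (A : Matrix (nbhdIdx d N) (nbhdIdx d N) ℂ) :
    coLift d N B * nbhdLift d N A = nbhdLift d N A * coLift d N B := by
  rw [coLift, nbhdLift, splitLift_mul, splitLift_mul]
  simp

lemma nbhdLift_conj (N : Finset (Fin n)) (A : Matrix (nbhdIdx d N) (nbhdIdx d N) ℂ) :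
    (nbhdLift d N A)ᴴ = nbhdLift d N Aᴴ := by
  rw [nbhdLift, splitLift_conj, conjTranspose_one, nbhdLift]

lemma gen_splitLift (N : Finset (Fin n)) (K : Matrix (nbhdIdx d N) (nbhdIdx d N) ℂ) {m : ℕ}
    (L : Fin m → Matrix (nbhdIdx d N) (nbhdIdx d N) ℂ) (A : Matrix (nbhdIdx d N) (nbhdIdx d N) ℂ)
    (B : Matrix (nbhdCoIdx d N) (nbhdCoIdx d N) ℂ) :
    gen (nbhdLift d N K) (fun k => nbhdLift d N (L k)) (splitLift d N A B) =
      splitLift d N (gen K L A) B := by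
  simp only [gen_apply, nbhdLift_conj]
  simp only [nbhdLift, splitLift_mul, splitLift_add, splitLift_sum, Matrix.one_mul, Matrix.mul_one]

lemma gen_ptrace (N : Finset (Fin n)) (K : Matrix (nbhdIdx d N) (nbhdIdx d N) ℂ) {m : ℕ}
    (L : Fin m → Matrix (nbhdIdx d N) (nbhdIdx d N) ℂ) (X : Matrix (∀ a, d a) (∀ a, d a) ℂ)
    (B : Matrix (nbhdCoIdx d N) (nbhdCoIdx d N) ℂ) :
    nbhdPtrace d N (coLift d N B * gen (nbhdLift d N K) (fun k => nbhdLift d N (L k)) X) =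
      gen K L (nbhdPtrace d N (coLift d N B * X)) := by
  simp only [gen_apply, nbhdLift_conj, Matrix.mul_add, Matrix.mul_sum, nbhdPtrace_add,
    nbhdPtrace_sum, ← Matrix.mul_assoc, coLift_comm, nbhdPtrace_mul_right]
  simp only [Matrix.mul_assoc (nbhdLift d N _), nbhdPtrace_mul_left]

lemma effK_lift (N : Finset (Fin n)) (H : Matrix (nbhdIdx d N) (nbhdIdx d N) ℂ) {m : ℕ}
    (L : Fin m → Matrix (nbhdIdx d N) (nbhdIdx d N) ℂ) :
    effK (nbhdLift d N H) (fun k => nbhdLift d N (L k)) = nbhdLift d N (effK H L) := by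
  simp only [effK, nbhdLift_conj, sub_eq_add_neg, ← neg_smul]
  simp only [nbhdLift, splitLift_mul, splitLift_add, splitLift_sum, splitLift_smul, Matrix.one_mul]

lemma schmidt_supp (N : Finset (Fin n)) {ρ : Matrix (∀ a, d a) (∀ a, d a) ℂ}
    (hρ : ρ.PosSemidef) {Q : Matrix (nbhdIdx d N) (nbhdIdx d N) ℂ} (hQ : Qᴴ = Q)
    (h : nbhdPtrace d N ρ * Q = 0) (B : Matrix (nbhdCoIdx d N) (nbhdCoIdx d N) ℂ) :
    nbhdPtrace d N (coLift d N B * ρ) * Q = 0 ∧ Q * nbhdPtrace d N (coLift d N B * ρ) = 0 := by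
  have hQc : (nbhdLift d N Q)ᴴ = nbhdLift d N Q := by rw [nbhdLift_conj, hQ]
  have h1 : ρ * nbhdLift d N Q = 0 := by
    obtain ⟨C, hC⟩ := psd_factor hρ
    have : ((C * nbhdLift d N Q)ᴴ * (C * nbhdLift d N Q)).trace = 0 := by
      rw [conjTranspose_mul, Matrix.mul_assoc, ← Matrix.mul_assoc Cᴴ, ← hC, hQc,
        ← nbhdPtrace_trace N, nbhdPtrace_mul_left, nbhdPtrace_mul_right, h]
      simp
    rw [hC, Matrix.mul_assoc, trace_conjTranspose_mul_self_eq_zero_iff.1 this, Matrix.mul_zero]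
  have h2 : nbhdLift d N Q * ρ = 0 := by
    have := congrArg conjTranspose h1
    rwa [conjTranspose_mul, hQc, hρ.1.eq, conjTranspose_zero] at this
  constructor
  · rw [← nbhdPtrace_mul_right, Matrix.mul_assoc, h1, Matrix.mul_zero, nbhdPtrace_zero]
  · rw [← nbhdPtrace_mul_left, ← Matrix.mul_assoc, ← coLift_comm, Matrix.mul_assoc, h2,
      Matrix.mul_zero, nbhdPtrace_zero]

lemma coLift_one (N : Finset (Fin n)) : coLift d N 1 = 1 := by
  rw [coLift, splitLift, ← submatrix_one_equiv (splitEquiv d N)]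
  congr 1
  exact Matrix.one_kronecker_one

lemma mem_extF (N : Finset (Fin n)) (ρ : Matrix (∀ a, d a) (∀ a, d a) ℂ) : ρ ∈ extF d N ρ := by
  have hdec : ρ = ∑ k : nbhdCoIdx d N, ∑ l : nbhdCoIdx d N,
      splitLift d N (nbhdPtrace d N (coLift d N (Matrix.single l k 1) * ρ))
        (Matrix.single k l 1) := by
    ext i j
    have hA : ∀ k l a b, nbhdPtrace d N (coLift d N (Matrix.single l k 1) * ρ) a b =
        ρ ((splitEquiv d N).symm (a, k)) ((splitEquiv d N).symm (b, l)) := by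
      intro k l a b
      simp only [nbhdPtrace, of_apply, Matrix.mul_apply, coLift, splitLift, submatrix_apply,
        ← (splitEquiv d N).symm.sum_comp, Fintype.sum_prod_type, Equiv.apply_symm_apply,
        kroneckerMap_apply, Matrix.one_apply, Matrix.single_apply]
      rw [Finset.sum_eq_single l (by intro c _ hc; simp [hc.symm]) (by simp)]
      rw [Finset.sum_eq_single a (by intro c _ hc; simp [hc.symm]) (by simp)]
      rw [Finset.sum_eq_single k (by intro c _ hc; simp [hc.symm]) (by simp)]
      simp
    simp only [Matrix.sum_apply, splitLift, submatrix_apply, kroneckerMap_apply, hA,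
      Matrix.single_apply]
    rw [Finset.sum_eq_single (splitEquiv d N i).2 (by intro c _ hc; simp [hc]) (by simp)]
    rw [Finset.sum_eq_single (splitEquiv d N j).2 (by intro c _ hc; simp [hc]) (by simp)]
    simp
  rw [hdec]
  conv => enter [1]; rw [← hdec]
  refine Submodule.sum_mem _ fun k _ => Submodule.sum_mem _ fun l _ => Submodule.subset_span ?_
  refine ⟨_, ?_, _, rfl⟩
  refine Submodule.mem_sInf.2 fun S hS => hS.1 ⟨_, rfl⟩

lemma extF_le_ker (N : Finset (Fin n)) {ρ : Matrix (∀ a, d a) (∀ a, d a) ℂ}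
    (hρ : ρ.PosSemidef)
    {L : Matrix (∀ a, d a) (∀ a, d a) ℂ →ₗ[ℂ] Matrix (∀ a, d a) (∀ a, d a) ℂ}
    (hL : IsNbhdGen d N L) (h0 : L ρ = 0) : extF d N ρ ≤ LinearMap.ker L := by
  obtain ⟨H, hH, m, Lk, rfl⟩ := hL
  rw [lindblad_eq_gen _ (by rw [IsHermitian, nbhdLift_conj, hH.eq]), effK_lift] at h0 ⊢
  have hS : ∀ A ∈ nbhdSchmidt d N ρ, gen (effK H Lk) Lk A = 0 := by
    rintro _ ⟨B, rfl⟩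
    rw [← gen_ptrace, h0, Matrix.mul_zero, nbhdPtrace_zero]
  have hF := Fdist_le (nbhdPtrace_psd N hρ) (effK_add H hH Lk)
    (hS _ ⟨1, by rw [coLift_one, Matrix.one_mul]⟩) hS (by
      rintro _ ⟨B, rfl⟩ Q hQ hQ0
      exact schmidt_supp N hρ hQ hQ0 B)
  refine Submodule.span_le.2 ?_
  rintro _ ⟨A, hA, B, rfl⟩
  have hA0 : gen (effK H Lk) Lk A = 0 := hF hA
  show gen _ _ _ = 0
  rw [gen_splitLift, hA0, splitLift_zero]

end AuxMulti

/-! ### Statement 7 -/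

theorem stmt7
    {n : ℕ} {d : Fin n → Type*} [∀ a, Fintype (d a)] [∀ a, DecidableEq (d a)]
    {M : ℕ} (Nb : Fin M → Finset (Fin n))
    (ρ : Matrix (∀ a, d a) (∀ a, d a) ℂ) (hρ : IsDensity ρ)
    (h : IsFFQLS d Nb ρ) :
    Submodule.span ℂ {ρ} = ⨅ j, extF d (Nb j) ρ := by
  obtain ⟨Lj, hN, hFF, hG⟩ := h
  apply le_antisymm
  · rw [Submodule.span_singleton_le_iff_mem, Submodule.mem_iInf]
    exact fun j => mem_extF (Nb j) ρ
  · intro X hX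
    rw [Submodule.mem_iInf] at hX
    have h0 : ∀ j, Lj j ρ = 0 := hFF ρ hρ hG.1
    have h1 : ∀ j, Lj j X = 0 := fun j => extF_le_ker (Nb j) hρ.1 (hN j) (h0 j) (hX j)
    have h2 : (∑ j, Lj j) X = 0 := by
      rw [LinearMap.sum_apply]
      exact Finset.sum_eq_zero fun j _ => h1 j
    rw [gas_ker hG h2]
    exact Submodule.smul_mem _ _ (Submodule.mem_span_singleton_self ρ)

end QDS
end

section
/- For each k let L_k be a QDS generator on B(H) with a fixed Lindblad representation with Hamiltonian H_k and noise operators {L_{j,k}}_j, and let L = Σ_k L_k (which has the Lindblad representation with Hamiltonian Σ_k H_k and noise operators ∪_k {L_{j,k}}). Assume: (i) for every k, alg{H_k together with all L_{j,k}} ⊆ alg{Σ_k H_k together with all L_{j,k} over all j, k}; and (ii) there exists a positive-definite density operator ρ with L(ρ) = 0 and L_k(ρ) = 0 for all k. Then every X ∈ ker(L) satisfies X ∈ ker(L_k) for all k; equivalently, ker(L) = ∩_k ker(L_k). -/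
namespace QDS

open Matrix
open scoped ComplexOrder

/-! ### Helper material for Statement 8 -/

section Helpers

variable {ι : Type*} [Fintype ι] [DecidableEq ι] {κ : Type*} [Fintype κ]

/-- Heisenberg-picture generator, as a plain function. -/
noncomputable def heis (H : Matrix ι ι ℂ) (L : κ → Matrix ι ι ℂ) (X : Matrix ι ι ℂ) :
    Matrix ι ι ℂ :=
  Complex.I • (H * X - X * H) +
    ∑ k, ((L k)ᴴ * X * L k - ((1 : ℂ)/2) • ((L k)ᴴ * L k * X + X * ((L k)ᴴ * L k)))

/-- Schroedinger-picture generator over an arbitrary finite index type. -/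
noncomputable def schr (H : Matrix ι ι ℂ) (L : κ → Matrix ι ι ℂ) (X : Matrix ι ι ℂ) :
    Matrix ι ι ℂ :=
  (-Complex.I) • (H * X - X * H) +
    ∑ k, (L k * X * (L k)ᴴ - ((1 : ℂ)/2) • ((L k)ᴴ * L k * X + X * ((L k)ᴴ * L k)))

lemma lindbladMap_apply (H : Matrix ι ι ℂ) {m : ℕ} (L : Fin m → Matrix ι ι ℂ)
    (X : Matrix ι ι ℂ) : lindbladMap H L X = schr H L X := by
  simp [lindbladMap, schr, LinearMap.sum_apply, mul_assoc]

lemma sum_lindbladMap_apply {K : ℕ} (H : Fin K → Matrix ι ι ℂ) (m : Fin K → ℕ)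
    (L : ∀ k, Fin (m k) → Matrix ι ι ℂ) (X : Matrix ι ι ℂ) :
    (∑ k, lindbladMap (H k) (L k)) X =
      schr (∑ k, H k) (fun p : (Σ k, Fin (m k)) => L p.1 p.2) X := by
  simp only [LinearMap.sum_apply, lindbladMap_apply, schr, Fintype.sum_sigma,
    Finset.sum_add_distrib, Finset.sum_mul, Finset.mul_sum, ← Finset.smul_sum,
    Finset.sum_sub_distrib]

lemma trace_heis (H : Matrix ι ι ℂ) (L : κ → Matrix ι ι ℂ) (X Y : Matrix ι ι ℂ) :
    (heis H L X * Y).trace = (X * schr H L Y).trace := by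
  have h1 : ∀ A B C : Matrix ι ι ℂ, (A * (B * C)).trace = (B * (C * A)).trace := by
    intro A B C
    rw [trace_mul_comm, mul_assoc]
  simp only [heis, schr, add_mul, mul_add, Finset.sum_mul, Finset.mul_sum, trace_add, trace_sum,
    smul_mul_assoc, mul_smul_comm, sub_mul, mul_sub, trace_sub, trace_smul, mul_assoc]
  congr 1
  · rw [h1 H X Y]
    simp only [smul_eq_mul]
    ring
  · refine Finset.sum_congr rfl fun k _ => ?_
    rw [h1 (L k)ᴴ X (L k * Y), h1 (L k)ᴴ (L k) (X * Y)]
    simp only [mul_assoc, smul_eq_mul]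
    rw [h1 (L k) X (Y * (L k)ᴴ)]
    simp only [mul_assoc]
    ring

lemma heis_conjTranspose (H : Matrix ι ι ℂ) (hH : H.IsHermitian) (L : κ → Matrix ι ι ℂ)
    (X : Matrix ι ι ℂ) : heis H L Xᴴ = (heis H L X)ᴴ := by
  simp only [heis, conjTranspose_add, conjTranspose_sum, conjTranspose_sub, conjTranspose_smul,
    conjTranspose_mul, conjTranspose_conjTranspose, hH.eq, mul_assoc]
  congr 1
  · simp only [Complex.star_def, Complex.conj_I]
    module
  · refine Finset.sum_congr rfl fun k _ => ?_
    have : star ((1 : ℂ) / 2) = 1 / 2 := by simp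
    rw [this]
    module

lemma dissipation (H : Matrix ι ι ℂ) (L : κ → Matrix ι ι ℂ) (X : Matrix ι ι ℂ) :
    heis H L (Xᴴ * X) = heis H L Xᴴ * X + Xᴴ * heis H L X +
      ∑ k, (L k * X - X * L k)ᴴ * (L k * X - X * L k) := by
  have h : ∀ k, (L k)ᴴ * (Xᴴ * X) * L k - ((1 : ℂ)/2) • ((L k)ᴴ * L k * (Xᴴ * X) +
      (Xᴴ * X) * ((L k)ᴴ * L k)) =
      ((L k)ᴴ * Xᴴ * L k - ((1 : ℂ)/2) • ((L k)ᴴ * L k * Xᴴ + Xᴴ * ((L k)ᴴ * L k))) * X +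
      Xᴴ * ((L k)ᴴ * X * L k - ((1 : ℂ)/2) • ((L k)ᴴ * L k * X + X * ((L k)ᴴ * L k))) +
      (L k * X - X * L k)ᴴ * (L k * X - X * L k) := by
    intro k
    simp only [conjTranspose_sub, conjTranspose_mul, mul_sub, sub_mul, mul_add, add_mul,
      smul_mul_assoc, mul_smul_comm, mul_assoc]
    module
  simp only [heis]
  rw [Finset.sum_congr rfl fun k _ => h k]
  simp only [Finset.sum_add_distrib, ← Finset.sum_mul, ← Finset.mul_sum, add_mul, mul_add,
    smul_mul_assoc, mul_smul_comm, sub_mul (H * Xᴴ), mul_sub Xᴴ (H * X), mul_assoc]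
  module

lemma eq_zero_of_conj {ρ C : Matrix ι ι ℂ} (hρ : ρ.PosDef) (h : C * ρ * Cᴴ = 0) : C = 0 := by
  ext i j
  by_contra hne
  have hv : (fun j => star (C i j)) ≠ 0 := by
    intro h0
    have := congrFun h0 j
    simp only [Pi.zero_apply, star_eq_zero] at this
    exact hne (by simpa using this)
  have hp := hρ.dotProduct_mulVec_pos hv
  have h2 := congrFun (congrFun h i) i
  rw [mul_assoc] at h2
  have h3 : star (fun j => star (C i j)) ⬝ᵥ (ρ *ᵥ fun j => star (C i j)) = 0 := by
    rw [← Matrix.zero_apply i i, ← h2]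
    simp [Matrix.mul_apply, dotProduct, mulVec]
  exact absurd h3 hp.ne'

lemma comm_noise {H : Matrix ι ι ℂ} (hH : H.IsHermitian) {L : κ → Matrix ι ι ℂ}
    {ρ : Matrix ι ι ℂ} (hρ : ρ.PosDef) (h0 : schr H L ρ = 0) {X : Matrix ι ι ℂ}
    (hX : heis H L X = 0) (k : κ) : L k * X = X * L k := by
  have hXs : heis H L Xᴴ = 0 := by rw [heis_conjTranspose H hH, hX, conjTranspose_zero]
  have ht := trace_heis H L (Xᴴ * X) ρ
  rw [h0, mul_zero, trace_zero, dissipation, hX, hXs] at ht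
  simp only [zero_mul, mul_zero, zero_add, Finset.sum_mul, trace_sum] at ht
  have hcyc : ∀ C : Matrix ι ι ℂ, (Cᴴ * C * ρ).trace = (C * ρ * Cᴴ).trace := by
    intro C
    rw [mul_assoc, trace_mul_comm]
  simp only [hcyc] at ht
  have hps : ∀ C : Matrix ι ι ℂ, (C * ρ * Cᴴ).PosSemidef := fun C =>
    hρ.posSemidef.mul_mul_conjTranspose_same C
  rw [Finset.sum_eq_zero_iff_of_nonneg (fun k _ => (hps _).trace_nonneg)] at ht
  have := eq_zero_of_conj hρ ((hps _).trace_eq_zero_iff.1 (ht k (Finset.mem_univ k)))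
  exact sub_eq_zero.1 this

lemma comm_all {H : Matrix ι ι ℂ} (hH : H.IsHermitian) {L : κ → Matrix ι ι ℂ}
    {ρ : Matrix ι ι ℂ} (hρ : ρ.PosDef) (h0 : schr H L ρ = 0) {X : Matrix ι ι ℂ}
    (hX : heis H L X = 0) :
    H * X = X * H ∧ ∀ k, L k * X = X * L k ∧ (L k)ᴴ * X = X * (L k)ᴴ := by
  have hXs : heis H L Xᴴ = 0 := by rw [heis_conjTranspose H hH, hX, conjTranspose_zero]
  have hk : ∀ k, L k * X = X * L k ∧ (L k)ᴴ * X = X * (L k)ᴴ := by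
    intro k
    refine ⟨comm_noise hH hρ h0 hX k, ?_⟩
    have := congrArg conjTranspose (comm_noise hH hρ h0 hXs k)
    simpa using this.symm
  refine ⟨?_, hk⟩
  have hs : ∀ k, (L k)ᴴ * X * L k - ((1 : ℂ)/2) • ((L k)ᴴ * L k * X + X * ((L k)ᴴ * L k)) = 0 := by
    intro k
    have e1 : (L k)ᴴ * X * L k = X * ((L k)ᴴ * L k) := by rw [(hk k).2, mul_assoc]
    have e2 : (L k)ᴴ * L k * X = X * ((L k)ᴴ * L k) := by
      rw [mul_assoc, (hk k).1, ← mul_assoc, (hk k).2, mul_assoc]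
    rw [e1, e2]
    module
  rw [heis, Finset.sum_congr rfl fun k _ => hs k] at hX
  simp only [Finset.sum_const_zero, add_zero, smul_eq_zero, Complex.I_ne_zero, false_or] at hX
  exact sub_eq_zero.1 hX

lemma schr_mul {H : Matrix ι ι ℂ} {L : κ → Matrix ι ι ℂ} {X : Matrix ι ι ℂ} (ρ : Matrix ι ι ℂ)
    (hH : H * X = X * H) (hk : ∀ k, L k * X = X * L k ∧ (L k)ᴴ * X = X * (L k)ᴴ) :
    schr H L (X * ρ) = X * schr H L ρ := by
  simp only [schr, mul_add, Finset.mul_sum, mul_smul_comm, mul_sub]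
  congr 1
  · rw [← mul_assoc H, hH]
    simp only [mul_assoc]
  · refine Finset.sum_congr rfl fun k _ => ?_
    have e2 : (L k)ᴴ * L k * (X * ρ) = X * ((L k)ᴴ * L k * ρ) := by
      rw [← mul_assoc, mul_assoc _ _ X, (hk k).1, ← mul_assoc, (hk k).2]
      simp only [mul_assoc]
    rw [e2, ← mul_assoc (L k) X, (hk k).1]
    simp only [mul_assoc]

/-- Heisenberg generator as a linear map. -/
noncomputable def heisLin (H : Matrix ι ι ℂ) (L : κ → Matrix ι ι ℂ) :
    Matrix ι ι ℂ →ₗ[ℂ] Matrix ι ι ℂ where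
  toFun := heis H L
  map_add' X Y := by
    simp only [heis, mul_add, add_mul]
    rw [show ∀ a b c d : Matrix ι ι ℂ, a + b + (c + d) = (a + c) + (b + d) from
      fun a b c d => by abel, ← Finset.sum_add_distrib]
    congr 1
    · module
    · exact Finset.sum_congr rfl fun k _ => by module
  map_smul' c X := by
    simp only [heis, smul_add, Finset.smul_sum, mul_smul_comm, smul_mul_assoc, RingHom.id_apply]
    congr 1
    · module
    · exact Finset.sum_congr rfl fun k _ => by module

lemma finrank_ker_le (S T : Matrix ι ι ℂ →ₗ[ℂ] Matrix ι ι ℂ)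
    (h : ∀ X Y, (T X * Y).trace = (X * S Y).trace) :
    Module.finrank ℂ (LinearMap.ker S) ≤ Module.finrank ℂ (LinearMap.ker T) := by
  -- the range of `S` is no smaller than the range of `T`
  let Φ : Matrix ι ι ℂ →ₗ[ℂ] Module.Dual ℂ (Matrix ι ι ℂ) :=
    LinearMap.mk₂ ℂ (fun X Y => (X * Y).trace)
      (by intros; simp [add_mul]) (by intros; simp) (by intros; simp [mul_add]) (by intros; simp)
  have hΦ : Function.Injective Φ := by
    intro A B hAB
    apply Matrix.ext_iff_trace_mul_right.2
    intro Y
    exact LinearMap.congr_fun hAB Y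
  have hcomp : Φ ∘ₗ T = S.dualMap ∘ₗ Φ := by
    refine LinearMap.ext fun X => LinearMap.ext fun Y => ?_
    exact h X Y
  have hb : Function.Bijective Φ :=
    ⟨hΦ, (LinearMap.injective_iff_surjective_of_finrank_eq_finrank
      (Subspace.dual_finrank_eq).symm).1 hΦ⟩
  have hT : Module.finrank ℂ (LinearMap.range T) = Module.finrank ℂ (LinearMap.range S) := by
    rw [← LinearMap.finrank_range_dualMap_eq_finrank_range S,
      ← LinearMap.range_comp_of_range_eq_top S.dualMap (LinearMap.range_eq_top.2 hb.2), ← hcomp,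
      LinearMap.range_comp]
    exact (Submodule.equivMapOfInjective Φ hΦ _).finrank_eq
  have := LinearMap.finrank_range_add_finrank_ker S
  have := LinearMap.finrank_range_add_finrank_ker T
  omega

end Helpers

/-! ### Statement 8 -/

theorem stmt8
    {ι : Type*} [Fintype ι] [DecidableEq ι] {K : ℕ}
    (Hk : Fin K → Matrix ι ι ℂ) (hHk : ∀ k, (Hk k).IsHermitian)
    (m : Fin K → ℕ) (Lkj : ∀ k, Fin (m k) → Matrix ι ι ℂ)
    (halg : ∀ k, StarAlgebra.adjoin ℂ ({Hk k} ∪ Set.range (Lkj k)) ≤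
      StarAlgebra.adjoin ℂ
        ({∑ k, Hk k} ∪ {X : Matrix ι ι ℂ | ∃ k j, X = Lkj k j}))
    (ρ : Matrix ι ι ℂ) (hρ : ρ.PosDef) (hρtr : ρ.trace = 1)
    (hρ0 : (∑ k, lindbladMap (Hk k) (Lkj k)) ρ = 0)
    (hρk : ∀ k, lindbladMap (Hk k) (Lkj k) ρ = 0) :
    LinearMap.ker (∑ k, lindbladMap (Hk k) (Lkj k)) =
      ⨅ k, LinearMap.ker (lindbladMap (Hk k) (Lkj k)) := by
  classical
  have hsumH : (∑ k, Hk k).IsHermitian := by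
    rw [IsHermitian, conjTranspose_sum]
    exact Finset.sum_congr rfl fun k _ => (hHk k).eq
  set S := ∑ k, lindbladMap (Hk k) (Lkj k) with hS
  let LL : (Σ k, Fin (m k)) → Matrix ι ι ℂ := fun p => Lkj p.1 p.2
  let T := heisLin (∑ k, Hk k) LL
  have hSapp : ∀ X, S X = schr (∑ k, Hk k) LL X := sum_lindbladMap_apply Hk m Lkj
  have hrho : schr (∑ k, Hk k) LL ρ = 0 := by rw [← hSapp, hρ0]
  have hfr : Module.finrank ℂ (LinearMap.ker S) ≤ Module.finrank ℂ (LinearMap.ker T) :=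
    finrank_ker_le S T fun X Y => by rw [hSapp]; exact trace_heis _ _ X Y
  -- elements of the kernel of the adjoint times `ρ` are invariant for every component
  have hcomm : ∀ X ∈ LinearMap.ker T, ∀ k, lindbladMap (Hk k) (Lkj k) (X * ρ) = 0 := by
    intro X hX k
    obtain ⟨h1, h2⟩ := comm_all hsumH hρ hrho (LinearMap.mem_ker.1 hX)
    have hmem : X ∈ StarSubalgebra.centralizer ℂ
        ({∑ k, Hk k} ∪ {X : Matrix ι ι ℂ | ∃ k j, X = Lkj k j}) := by
      rw [StarSubalgebra.mem_centralizer_iff]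
      rintro g (hg | ⟨k, j, rfl⟩)
      · rw [Set.mem_singleton_iff] at hg
        subst hg
        refine ⟨h1, ?_⟩
        rw [star_eq_conjTranspose, hsumH.eq]
        exact h1
      · exact h2 ⟨k, j⟩
    have hH1 : ∀ Y ∈ ({Hk k} ∪ Set.range (Lkj k) : Set (Matrix ι ι ℂ)),
        Y * X = X * Y ∧ Yᴴ * X = X * Yᴴ := by
      intro Y hY
      have hY' := StarAlgebra.adjoin_le_centralizer_centralizer ℂ _
        (halg k (StarAlgebra.subset_adjoin ℂ _ hY))
      have := (StarSubalgebra.mem_centralizer_iff ℂ).1 hY' X hmem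
      refine ⟨this.1.symm, ?_⟩
      have h3 := congrArg conjTranspose this.2
      simpa [star_eq_conjTranspose] using h3
    rw [lindbladMap_apply, schr_mul ρ (hH1 _ (Or.inl rfl)).1
      (fun j => hH1 _ (Or.inr ⟨j, rfl⟩)), ← lindbladMap_apply, hρk, mul_zero]
  have hinj : Function.Injective (LinearMap.mulRight ℂ ρ) := by
    intro A B hAB
    exact hρ.isUnit.mul_right_cancel (by simpa using hAB)
  have hmapk : (LinearMap.ker T).map (LinearMap.mulRight ℂ ρ) ≤
      ⨅ k, LinearMap.ker (lindbladMap (Hk k) (Lkj k)) := by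
    rintro _ ⟨X, hX, rfl⟩
    simp only [Submodule.mem_iInf, LinearMap.mem_ker, LinearMap.mulRight_apply]
    exact hcomm X hX
  have hle : (⨅ k, LinearMap.ker (lindbladMap (Hk k) (Lkj k))) ≤ LinearMap.ker S := by
    intro X hX
    simp only [Submodule.mem_iInf, LinearMap.mem_ker] at hX
    rw [LinearMap.mem_ker, hS, LinearMap.sum_apply]
    exact Finset.sum_eq_zero fun k _ => hX k
  refine le_antisymm ?_ hle
  have heq : (LinearMap.ker T).map (LinearMap.mulRight ℂ ρ) = LinearMap.ker S := by
    apply Submodule.eq_of_le_of_finrank_le (hmapk.trans hle)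
    rw [← (Submodule.equivMapOfInjective _ hinj (LinearMap.ker T)).finrank_eq]
    exact hfr
  rw [← heq]
  exact hmapk

end QDS
end

section
/- Let T = Σ_k p_k T_k where each T_k : B(H) → B(H) is CPTP, p_k > 0 and Σ_k p_k = 1. If there exists a positive-definite density operator ρ with T(ρ) = ρ and T_k(ρ) = ρ for all k, then fix(T) = ∩_k fix(T_k); in particular, every X with T(X) = X satisfies T_k(X) = X for all k. -/
namespace QDS

open Matrix
open scoped ComplexOrder

/-! ### Statement 9 -/

theorem wq_nonneg {ι : Type*} [Fintype ι] [DecidableEq ι] {A : Matrix ι ι ℂ}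
    (hA : A.PosSemidef) (X : Matrix ι ι ℂ) : 0 ≤ (Xᴴ * A * X).trace :=
  (hA.conjTranspose_mul_mul_same X).trace_nonneg

theorem wq_eq_zero {ι : Type*} [Fintype ι] [DecidableEq ι] {A : Matrix ι ι ℂ}
    (hA : A.PosDef) (X : Matrix ι ι ℂ) (h : (Xᴴ * A * X).trace = 0) : X = 0 := by
  have h0 : Xᴴ * A * X = 0 :=
    (hA.posSemidef.conjTranspose_mul_mul_same X).trace_eq_zero_iff.1 h
  by_contra hX
  have : ∃ v : ι → ℂ, X *ᵥ v ≠ 0 := by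
    by_contra! hv
    exact hX (Matrix.ext_of_mulVec_single fun i => by rw [hv, Matrix.zero_mulVec])
  obtain ⟨v, hv⟩ := this
  have h1 := hA.dotProduct_mulVec_pos hv
  have h2 : star (X *ᵥ v) ⬝ᵥ (A *ᵥ (X *ᵥ v)) = star v ⬝ᵥ ((Xᴴ * A * X) *ᵥ v) := by
    rw [Matrix.star_mulVec, ← Matrix.dotProduct_mulVec]
    simp [Matrix.mulVec_mulVec, Matrix.mul_assoc]
  rw [h2, h0] at h1
  simp at h1

theorem wq_contract {ι : Type*} [Fintype ι] [DecidableEq ι]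
    (T : Matrix ι ι ℂ →ₗ[ℂ] Matrix ι ι ℂ) (hT : IsCPTP T)
    (ρ : Matrix ι ι ℂ) (hρ : ρ.PosDef) (hfix : T ρ = ρ) (X : Matrix ι ι ℂ) :
    ((T X)ᴴ * ρ⁻¹ * T X).trace ≤ (Xᴴ * ρ⁻¹ * X).trace := by
  obtain ⟨m, M, hM, hM1⟩ := hT
  have hu : IsUnit ρ.det := (Matrix.isUnit_iff_isUnit_det ρ).1 hρ.isUnit
  have hH : ρᴴ = ρ := hρ.isHermitian
  have hHi : (ρ⁻¹)ᴴ = ρ⁻¹ := hρ.inv.isHermitian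
  set Y := T X with hY
  have hYs : Y = ∑ k, M k * X * (M k)ᴴ := hM X
  have hYh : Yᴴ = ∑ k, M k * Xᴴ * (M k)ᴴ := by
    rw [hYs, Matrix.conjTranspose_sum]
    simp [Matrix.mul_assoc]
  have hr : ∑ k, M k * ρ * (M k)ᴴ = ρ := by rw [← hM, hfix]
  have key : ∀ i, (0 : ℂ) ≤ ((ρ⁻¹ * X * (M i)ᴴ - (M i)ᴴ * (ρ⁻¹ * Y))ᴴ * ρ *
      (ρ⁻¹ * X * (M i)ᴴ - (M i)ᴴ * (ρ⁻¹ * Y))).trace :=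
    fun i => wq_nonneg hρ.posSemidef _
  have expand : ∀ i, ((ρ⁻¹ * X * (M i)ᴴ - (M i)ᴴ * (ρ⁻¹ * Y))ᴴ * ρ *
      (ρ⁻¹ * X * (M i)ᴴ - (M i)ᴴ * (ρ⁻¹ * Y))).trace =
      (Xᴴ * ρ⁻¹ * X * ((M i)ᴴ * M i)).trace - ((M i * Xᴴ * (M i)ᴴ) * (ρ⁻¹ * Y)).trace
      - (Yᴴ * ρ⁻¹ * (M i * X * (M i)ᴴ)).trace
      + (Yᴴ * ρ⁻¹ * (M i * ρ * (M i)ᴴ) * (ρ⁻¹ * Y)).trace := by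
    intro i
    have e : (ρ⁻¹ * X * (M i)ᴴ - (M i)ᴴ * (ρ⁻¹ * Y))ᴴ * ρ *
      (ρ⁻¹ * X * (M i)ᴴ - (M i)ᴴ * (ρ⁻¹ * Y)) =
      M i * (Xᴴ * ρ⁻¹ * X * (M i)ᴴ) - (M i * Xᴴ * (M i)ᴴ) * (ρ⁻¹ * Y)
      - Yᴴ * ρ⁻¹ * (M i * X * (M i)ᴴ)
      + Yᴴ * ρ⁻¹ * (M i * ρ * (M i)ᴴ) * (ρ⁻¹ * Y) := by
      simp only [Matrix.conjTranspose_sub, Matrix.conjTranspose_mul,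
        Matrix.conjTranspose_conjTranspose, hHi, Matrix.sub_mul, Matrix.mul_sub,
        Matrix.mul_assoc, Matrix.mul_nonsing_inv_cancel_left _ _ hu,
        Matrix.nonsing_inv_mul_cancel_left _ _ hu]
      abel
    rw [e, Matrix.trace_add, Matrix.trace_sub, Matrix.trace_sub, Matrix.trace_mul_comm (M i)]
    simp only [Matrix.mul_assoc]
  have hs := Finset.sum_nonneg (s := Finset.univ) fun i _ => key i
  simp only [expand] at hs
  rw [Finset.sum_add_distrib, Finset.sum_sub_distrib, Finset.sum_sub_distrib] at hs
  simp only [← Matrix.trace_sum, ← Matrix.mul_sum, ← Matrix.sum_mul] at hs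
  rw [hM1, ← hYs, ← hYh, hr, Matrix.mul_one] at hs
  have e2 : Yᴴ * ρ⁻¹ * ρ * (ρ⁻¹ * Y) = Yᴴ * ρ⁻¹ * Y := by
    rw [Matrix.nonsing_inv_mul_cancel_right _ _ hu, Matrix.mul_assoc]
  rw [e2, ← Matrix.mul_assoc] at hs
  simpa using hs

theorem stmt9
    {ι : Type*} [Fintype ι] [DecidableEq ι] {K : ℕ}
    (p : Fin K → ℝ) (hp : ∀ k, 0 < p k) (hpsum : ∑ k, p k = 1)
    (T : Fin K → (Matrix ι ι ℂ →ₗ[ℂ] Matrix ι ι ℂ)) (hT : ∀ k, IsCPTP (T k))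
    (ρ : Matrix ι ι ℂ) (hρ : ρ.PosDef) (hρtr : ρ.trace = 1)
    (hρfix : (∑ k, (p k : ℂ) • T k) ρ = ρ) (hρk : ∀ k, T k ρ = ρ) :
    fixSet (∑ k, (p k : ℂ) • T k) = ⋂ k, fixSet (T k) := by
  ext X
  simp only [Set.mem_iInter, fixSet, Set.mem_setOf_eq, LinearMap.sum_apply, LinearMap.smul_apply]
  have hpc : ∑ k, (p k : ℂ) = 1 := by exact_mod_cast hpsum
  constructor
  · intro h
    set q : Matrix ι ι ℂ → ℂ := fun Z => (Zᴴ * ρ⁻¹ * Z).trace with hq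
    have hn : ∀ k, 0 ≤ (p k : ℂ) * q (T k X - X) := fun k =>
      mul_nonneg (by exact_mod_cast (hp k).le) (wq_nonneg hρ.inv.posSemidef _)
    have hc : ∀ k, (p k : ℂ) * q (T k X) ≤ (p k : ℂ) * q X := fun k =>
      mul_le_mul_of_nonneg_left (wq_contract (T k) (hT k) ρ hρ (hρk k) X)
        (by exact_mod_cast (hp k).le)
    have h1 : ∑ k, (p k : ℂ) * (Xᴴ * ρ⁻¹ * T k X).trace = q X := by
      conv_rhs => rw [hq]; simp only []; rw [← h]
      have : (∑ k, (p k : ℂ) • T k X)ᴴ = Xᴴ := by rw [h]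
      rw [this, Matrix.mul_sum, Matrix.trace_sum]
      simp
    have h2 : ∑ k, (p k : ℂ) * ((T k X)ᴴ * ρ⁻¹ * X).trace = q X := by
      have h' : ∑ k, (p k : ℂ) • (T k X)ᴴ = Xᴴ := by
        conv_rhs => rw [← h]
        simp [Matrix.conjTranspose_sum, Matrix.conjTranspose_smul]
      simp only [hq]
      rw [← h', Matrix.sum_mul, Matrix.sum_mul, Matrix.trace_sum]
      simp
    have h3 : ∑ k, (p k : ℂ) * q (T k X - X) = ∑ k, (p k : ℂ) * q (T k X) - q X := by
      have e : ∀ k, (p k : ℂ) * q (T k X - X) = (p k : ℂ) * q (T k X)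
          - (p k : ℂ) * (Xᴴ * ρ⁻¹ * T k X).trace - (p k : ℂ) * ((T k X)ᴴ * ρ⁻¹ * X).trace
          + (p k : ℂ) * q X := by
        intro k
        simp only [hq, Matrix.conjTranspose_sub, Matrix.sub_mul, Matrix.mul_sub, Matrix.trace_sub]
        ring
      simp only [e]
      rw [Finset.sum_add_distrib, Finset.sum_sub_distrib, Finset.sum_sub_distrib, h1, h2,
        ← Finset.sum_mul, hpc]
      ring
    have h4 : ∑ k, (p k : ℂ) * q (T k X) ≤ q X := by
      refine (Finset.sum_le_sum fun k _ => hc k).trans_eq ?_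
      rw [← Finset.sum_mul, hpc, one_mul]
    have h5 : ∑ k, (p k : ℂ) * q (T k X - X) = 0 :=
      le_antisymm (by rw [h3]; exact sub_nonpos.2 h4) (Finset.sum_nonneg fun k _ => hn k)
    intro k
    have h6 := (Finset.sum_eq_zero_iff_of_nonneg fun k _ => hn k).1 h5 k (Finset.mem_univ k)
    have h7 : q (T k X - X) = 0 :=
      (mul_eq_zero.1 h6).resolve_left (by exact_mod_cast (hp k).ne')
    exact sub_eq_zero.1 (wq_eq_zero hρ.inv _ h7)
  · intro h
    simp only [h]
    rw [← Finset.sum_smul, hpc, one_smul]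

end QDS
end

section
/- Let T = Σ_k p_k T_k where each T_k : B(H) → B(H) is CPTP, p_k > 0 and Σ_k p_k = 1. Assume: (i) there exists a density operator ρ with T_k(ρ) = ρ for all k; and (ii) supp(ρ) = supp(fix(T)) = supp(fix(T_k)) for every k. Then fix(T) = ∩_k fix(T_k); in particular, every X with T(X) = X satisfies T_k(X) = X for all k. -/
namespace QDS

open Matrix
open scoped ComplexOrder

/-! ### Statement 10 -/

/-! ### Helpers -/

lemma psd_mul_eq_zero {ι : Type*} [Fintype ι] [DecidableEq ι] {ρ D : Matrix ι ι ℂ}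
    (hρ : ρ.PosSemidef) (h : (Dᴴ * ρ * D).trace = 0) : ρ * D = 0 := by
  obtain ⟨B, rfl⟩ : ∃ B : Matrix ι ι ℂ, ρ = Bᴴ * B := by
    open MatrixOrder in
    exact CStarAlgebra.nonneg_iff_eq_star_mul_self.mp hρ.nonneg
  have h2 : ((B * D)ᴴ * (B * D)).trace = 0 := by
    rw [← h, conjTranspose_mul]; simp only [Matrix.mul_assoc]
  have h3 : B * D = 0 := Matrix.trace_conjTranspose_mul_self_eq_zero_iff.mp h2
  rw [Matrix.mul_assoc, h3, Matrix.mul_zero]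

/-- Expansion of the quadratic form. -/
lemma expand_key {ι : Type*} [Fintype ι] [DecidableEq ι] {ρ Y : Matrix ι ι ℂ}
    (hρ : ρ.IsHermitian) {m : ℕ} (M : Fin m → Matrix ι ι ℂ)
    (h1 : ∑ i, (M i)ᴴ * M i = 1) (hfix : ∑ i, M i * ρ * (M i)ᴴ = ρ) :
    ∑ i, ((((M i)ᴴ * Y - Y * (M i)ᴴ)ᴴ * ρ * ((M i)ᴴ * Y - Y * (M i)ᴴ)).trace)
      = 2 * (Yᴴ * (ρ * Y)).trace - (Yᴴ * ∑ i, M i * (ρ * Y) * (M i)ᴴ).trace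
        - star (Yᴴ * ∑ i, M i * (ρ * Y) * (M i)ᴴ).trace := by
  have e : ∀ i, ((((M i)ᴴ * Y - Y * (M i)ᴴ)ᴴ * ρ * ((M i)ᴴ * Y - Y * (M i)ᴴ)).trace)
      = (Yᴴ * (M i * ρ * (M i)ᴴ) * Y).trace + (Yᴴ * (ρ * Y) * ((M i)ᴴ * M i)).trace
        - (Yᴴ * (M i * (ρ * Y) * (M i)ᴴ)).trace
        - star (Yᴴ * (M i * (ρ * Y) * (M i)ᴴ)).trace := by
    intro i
    rw [← trace_conjTranspose]
    have c : (Yᴴ * (ρ * Y) * ((M i)ᴴ * M i)).trace = (M i * (Yᴴ * (ρ * Y)) * (M i)ᴴ).trace := by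
      rw [← Matrix.mul_assoc, Matrix.trace_mul_comm, ← Matrix.mul_assoc]
    rw [c]
    simp only [conjTranspose_sub, conjTranspose_mul, conjTranspose_conjTranspose, hρ.eq,
      Matrix.sub_mul, Matrix.mul_sub, trace_sub, Matrix.mul_assoc]
    ring
  rw [Finset.sum_congr rfl fun i _ => e i]
  rw [Finset.sum_sub_distrib, Finset.sum_sub_distrib, Finset.sum_add_distrib]
  rw [← star_sum]
  simp only [← trace_sum, ← Finset.mul_sum, ← Finset.sum_mul]
  rw [h1, hfix, Matrix.mul_one, Matrix.mul_assoc]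
  ring

lemma herm_fix {ι : Type*} [Fintype ι] [DecidableEq ι]
    {T : Matrix ι ι ℂ →ₗ[ℂ] Matrix ι ι ℂ} (hT : IsCPTP T) (X : Matrix ι ι ℂ) :
    T Xᴴ = (T X)ᴴ := by
  obtain ⟨m, M, hM, -⟩ := hT
  rw [hM, hM, conjTranspose_sum]
  simp [Matrix.mul_assoc]

theorem stmt10
    {ι : Type*} [Fintype ι] [DecidableEq ι] {K : ℕ}
    (p : Fin K → ℝ) (hp : ∀ k, 0 < p k) (hpsum : ∑ k, p k = 1)
    (T : Fin K → (Matrix ι ι ℂ →ₗ[ℂ] Matrix ι ι ℂ)) (hT : ∀ k, IsCPTP (T k))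
    (ρ : Matrix ι ι ℂ) (hρ : IsDensity ρ)
    (hρk : ∀ k, T k ρ = ρ)
    (hsupp : msupp ρ = suppSet (fixSet (∑ k, (p k : ℂ) • T k)))
    (hsuppk : ∀ k, msupp ρ = suppSet (fixSet (T k))) :
    fixSet (∑ k, (p k : ℂ) • T k) = ⋂ k, fixSet (T k) := by
  ext X
  simp only [Set.mem_iInter]
  constructor
  swap
  · intro h
    change (∑ k, (p k : ℂ) • T k) X = X
    have h' : ∀ k, T k X = X := h
    simp only [LinearMap.sum_apply, LinearMap.smul_apply, h']
    rw [← Finset.sum_smul, ← Complex.ofReal_sum, hpsum, Complex.ofReal_one, one_smul]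
  intro hX
  have hX' : ∑ k, (p k : ℂ) • T k X = X := by
    have : (∑ k, (p k : ℂ) • T k) X = X := hX
    simpa [LinearMap.sum_apply, LinearMap.smul_apply] using this
  have hXs : Xᴴ ∈ fixSet (∑ k, (p k : ℂ) • T k) := by
    change (∑ k, (p k : ℂ) • T k) Xᴴ = Xᴴ
    simp only [LinearMap.sum_apply, LinearMap.smul_apply]
    conv_rhs => rw [← hX', conjTranspose_sum]
    refine Finset.sum_congr rfl fun k _ => ?_
    rw [herm_fix (hT k), conjTranspose_smul]
    simp
  have hle : msupp Xᴴ ≤ msupp ρ := by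
    rw [hsupp]
    exact le_iSup₂_of_le (f := fun O (_ : O ∈ fixSet (∑ k, (p k : ℂ) • T k)) => msupp O)
      Xᴴ hXs le_rfl
  have hherm : ρ.IsHermitian := hρ.1.isHermitian
  obtain ⟨Y, rfl⟩ : ∃ Y, X = ρ * Y := by
    have hcol : ∀ j, ∃ y : ι → ℂ, ρ *ᵥ y = X.col j := by
      intro j
      have : X.col j ∈ msupp Xᴴ := by
        refine ⟨Pi.single j 1, ?_⟩
        simp
      obtain ⟨y, hy⟩ := hle this
      refine ⟨y, ?_⟩
      rw [hherm.eq] at hy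
      exact hy
    choose y hy using hcol
    refine ⟨Matrix.of fun i j => y j i, ?_⟩
    ext i j
    have := congrFun (hy j) i
    simp only [Matrix.col_apply] at this
    rw [← this]
    rfl
  choose m M hM h1 using hT
  let a : ℂ := (Yᴴ * (ρ * Y)).trace
  let b : Fin K → ℂ := fun k => (Yᴴ * T k (ρ * Y)).trace
  let S : Fin K → ℂ := fun k => ∑ i, ((((M k i)ᴴ * Y - Y * (M k i)ᴴ)ᴴ * ρ *
    ((M k i)ᴴ * Y - Y * (M k i)ᴴ)).trace)
  have hS : ∀ k, S k = 2 * a - b k - star (b k) := by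
    intro k
    have := expand_key (Y := Y) hherm (M k) (h1 k) (by rw [← hM, hρk])
    rw [← hM] at this
    exact this
  have hnn : ∀ k i, 0 ≤ ((((M k i)ᴴ * Y - Y * (M k i)ᴴ)ᴴ * ρ *
      ((M k i)ᴴ * Y - Y * (M k i)ᴴ)).trace) := fun k i =>
    (hρ.1.conjTranspose_mul_mul_same _).trace_nonneg
  have hSnn : ∀ k, 0 ≤ S k := fun k => Finset.sum_nonneg fun i _ => hnn k i
  have hab : ∑ k, (p k : ℂ) * b k = a := by
    have := congrArg (fun Z => (Yᴴ * Z).trace) hX'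
    simpa [Finset.mul_sum, trace_sum, a, b] using this
  have hastar : star a = a := by
    simp only [a]
    rw [← trace_conjTranspose]
    simp [hherm.eq, Matrix.mul_assoc]
  have hsumS : ∑ k, (p k : ℂ) * S k = 0 := by
    have hab' : ∑ k, (p k : ℂ) * star (b k) = a := by
      rw [← hastar, ← hab, star_sum]
      simp
    simp only [hS, mul_sub, Finset.sum_sub_distrib, hab, hab']
    rw [← Finset.sum_mul, ← Complex.ofReal_sum, hpsum]
    push_cast
    ring
  have hpc : ∀ k, (0 : ℂ) < (p k : ℂ) := fun k => by exact_mod_cast hp k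
  intro k
  have hk : S k = 0 := by
    have := (Finset.sum_eq_zero_iff_of_nonneg
      (fun k _ => mul_nonneg (hpc k).le (hSnn k))).mp hsumS k (Finset.mem_univ k)
    exact (mul_eq_zero.mp this).resolve_left (hpc k).ne'
  have hD : ∀ i, ρ * ((M k i)ᴴ * Y - Y * (M k i)ᴴ) = 0 := fun i =>
    psd_mul_eq_zero hρ.1 ((Finset.sum_eq_zero_iff_of_nonneg
      (fun i _ => hnn k i)).mp hk i (Finset.mem_univ i))
  change T k (ρ * Y) = ρ * Y
  conv_rhs => rw [← hρk k, hM, Finset.sum_mul]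
  rw [hM]
  refine Finset.sum_congr rfl fun i _ => ?_
  have := hD i
  rw [Matrix.mul_sub, sub_eq_zero] at this
  simp only [Matrix.mul_assoc]
  rw [this]

end QDS
end
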